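/- arXiv:0808.0934 — 4 statements merged into one kernel-verified Lean document; each statement's English description precedes it below -/
import Mathlib

section
/- Let a, b, c, d, e, f be nonzero integers and suppose the triangle G = G(a,b;c,d;e,f) is developable. Then: (i) in G, the intersection of the subgroup generated by {x, y} with the subgroup generated by {y, z} equals the cyclic subgroup generated by y, and the same holds after cyclically permuting (x,y,z) and the parameter pairs accordingly; (ii) if |a| = |b|, |c| = |d|, and |e| = |f|, then there exist positive integers i, j, k such that x^i, y^j, z^k generate a subgroup of G isomorphic to ℤ³. -/
/-!
Write `s`, `t` for the generators of `BS(m,n)`. Three facts about this group carry the proof.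

* `⟨s⟩` is commensurated by the whole group (`IsBSPair.exists_conj_s`).
* If an element conjugates a nontrivial power of `t` to a power of `t`, the exponents agree, by the
  exponent sum in `t`, and the element has the form `t ^ l * s ^ k` (`IsBSPair.of_conj_t`). This rests
  on Britton's lemma for `BS(m,n)` as an HNN extension (`exists_eq_t_zpow_mul_of`).
* If nontrivial powers of `s` and `t` commute then `|m| = |n|` (`IsBSPair.abs_eq`), by the affine
  action on `ℚ`.

If `|a| = |b|`, `|c| = |d|` and `|e| = |f|`, sufficiently divisible powers of `x`, `y`, `z` commute, and
they are independent (`IsTriangle.independent`). When `a = b`, `c = d`, `e = f`, this is seen in the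
abelianization. When, say, `b = -a`, a relation `x ^ p * y ^ q * z ^ r = 1` is multiplied by its
conjugate under `y`, which inverts `x ^ p`; the result is a relation in `⟨y, z⟩` with exponent sum
`-2 * r` in `z`, so `r = 0`, and then `p = q = 0` in `⟨x, y⟩`. This gives (ii).

For (i), let `g` lie in `⟨x, y⟩ ∩ ⟨y, z⟩`. It commensurates `⟨y⟩`, so `g = y ^ l * x ^ k`, where
`x ^ k` lies in `⟨y, z⟩` and commutes with a power of `y`. If `k ≠ 0` then `|a| = |b|`; since `x ^ k`
also commensurates `⟨z⟩`, a multiple `κ` of `k` satisfies `x ^ κ = z ^ l' * y ^ i`, and `|e| = |f|`.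
Then either `l' = 0`, which is impossible in `⟨x, y⟩`, or `|c| = |d|` and independence is
contradicted (`IsTriangle.eq_zero_of_zpow_mem`). The remaining intersections follow by rotating the
triangle.
-/

/-- Generators of the triangle group. -/
inductive TGen | x | y | z
  deriving DecidableEq

/-- Generators of a Baumslag-Solitar group. -/
inductive BGen | s | t
  deriving DecidableEq

open FreeGroup in
/-- Relators of the triangle of Baumslag-Solitar groups `G(a,b;c,d;e,f)`. -/
def triRels (a b c d e f : ℤ) : Set (FreeGroup TGen) :=
  {(of TGen.y)⁻¹ * (of TGen.x) ^ a * of TGen.y * ((of TGen.x) ^ b)⁻¹,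
   (of TGen.z)⁻¹ * (of TGen.y) ^ c * of TGen.z * ((of TGen.y) ^ d)⁻¹,
   (of TGen.x)⁻¹ * (of TGen.z) ^ e * of TGen.x * ((of TGen.z) ^ f)⁻¹}

/-- The triangle of Baumslag-Solitar groups `G(a,b;c,d;e,f)`. -/
abbrev TriG (a b c d e f : ℤ) := PresentedGroup (triRels a b c d e f)

/-- The generator `x` of `G(a,b;c,d;e,f)`. -/
def gx (a b c d e f : ℤ) : TriG a b c d e f := PresentedGroup.of TGen.x
/-- The generator `y` of `G(a,b;c,d;e,f)`. -/
def gy (a b c d e f : ℤ) : TriG a b c d e f := PresentedGroup.of TGen.y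
/-- The generator `z` of `G(a,b;c,d;e,f)`. -/
def gz (a b c d e f : ℤ) : TriG a b c d e f := PresentedGroup.of TGen.z

open FreeGroup in
/-- Relator of the Baumslag-Solitar group `BS(m,n)`. -/
def bsRels (m n : ℤ) : Set (FreeGroup BGen) :=
  {(of BGen.t)⁻¹ * (of BGen.s) ^ m * of BGen.t * ((of BGen.s) ^ n)⁻¹}

/-- The Baumslag-Solitar group `BS(m,n)`. -/
abbrev BS (m n : ℤ) := PresentedGroup (bsRels m n)

/-- The generator `s` of `BS(m,n)`. -/
def bs (m n : ℤ) : BS m n := PresentedGroup.of BGen.s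
/-- The generator `t` of `BS(m,n)`. -/
def bt (m n : ℤ) : BS m n := PresentedGroup.of BGen.t

lemma mk_rel_eq_one {α : Type*} {rels : Set (FreeGroup α)} {r : FreeGroup α} (hr : r ∈ rels) :
    PresentedGroup.mk rels r = 1 :=
  (QuotientGroup.eq_one_iff _).mpr (Subgroup.subset_normalClosure hr)

lemma relXY (a b c d e f : ℤ) :
    (gy a b c d e f)⁻¹ * gx a b c d e f ^ a * gy a b c d e f * (gx a b c d e f ^ b)⁻¹ = 1 := by
  have h := mk_rel_eq_one (rels := triRels a b c d e f)
    (r := (FreeGroup.of TGen.y)⁻¹ * (FreeGroup.of TGen.x) ^ a * FreeGroup.of TGen.y *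
      ((FreeGroup.of TGen.x) ^ b)⁻¹) (by left; rfl)
  simpa [gx, gy, PresentedGroup.of, map_mul, map_inv, map_zpow] using h

lemma relYZ (a b c d e f : ℤ) :
    (gz a b c d e f)⁻¹ * gy a b c d e f ^ c * gz a b c d e f * (gy a b c d e f ^ d)⁻¹ = 1 := by
  have h := mk_rel_eq_one (rels := triRels a b c d e f)
    (r := (FreeGroup.of TGen.z)⁻¹ * (FreeGroup.of TGen.y) ^ c * FreeGroup.of TGen.z *
      ((FreeGroup.of TGen.y) ^ d)⁻¹) (by right; left; rfl)
  simpa [gy, gz, PresentedGroup.of, map_mul, map_inv, map_zpow] using h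

lemma relZX (a b c d e f : ℤ) :
    (gx a b c d e f)⁻¹ * gz a b c d e f ^ e * gx a b c d e f * (gz a b c d e f ^ f)⁻¹ = 1 := by
  have h := mk_rel_eq_one (rels := triRels a b c d e f)
    (r := (FreeGroup.of TGen.x)⁻¹ * (FreeGroup.of TGen.z) ^ e * FreeGroup.of TGen.x *
      ((FreeGroup.of TGen.z) ^ f)⁻¹) (by right; right; rfl)
  simpa [gz, gx, PresentedGroup.of, map_mul, map_inv, map_zpow] using h

/-- The canonical homomorphism `BS(a,b) → G(a,b;c,d;e,f)` sending `s ↦ x`, `t ↦ y`. -/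
def bsToXY (a b c d e f : ℤ) : BS a b →* TriG a b c d e f :=
  PresentedGroup.toGroup
    (f := fun g => match g with | BGen.s => gx a b c d e f | BGen.t => gy a b c d e f)
    (by
      rintro r hr
      rw [bsRels, Set.mem_singleton_iff] at hr
      subst hr
      simpa [map_mul, map_inv, map_zpow] using relXY a b c d e f)

/-- The canonical homomorphism `BS(c,d) → G(a,b;c,d;e,f)` sending `s ↦ y`, `t ↦ z`. -/
def bsToYZ (a b c d e f : ℤ) : BS c d →* TriG a b c d e f :=
  PresentedGroup.toGroup
    (f := fun g => match g with | BGen.s => gy a b c d e f | BGen.t => gz a b c d e f)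
    (by
      rintro r hr
      rw [bsRels, Set.mem_singleton_iff] at hr
      subst hr
      simpa [map_mul, map_inv, map_zpow] using relYZ a b c d e f)

/-- The canonical homomorphism `BS(e,f) → G(a,b;c,d;e,f)` sending `s ↦ z`, `t ↦ x`. -/
def bsToZX (a b c d e f : ℤ) : BS e f →* TriG a b c d e f :=
  PresentedGroup.toGroup
    (f := fun g => match g with | BGen.s => gz a b c d e f | BGen.t => gx a b c d e f)
    (by
      rintro r hr
      rw [bsRels, Set.mem_singleton_iff] at hr
      subst hr
      simpa [map_mul, map_inv, map_zpow] using relZX a b c d e f)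

/-- The triangle of groups `G(a,b;c,d;e,f)` is developable if each of the three
Baumslag-Solitar vertex groups injects into it. -/
def Developable (a b c d e f : ℤ) : Prop :=
  Function.Injective (bsToXY a b c d e f) ∧ Function.Injective (bsToYZ a b c d e f) ∧
    Function.Injective (bsToZX a b c d e f)

namespace TriangleBS

/-! ### Elements of an HNN extension commuting with a power of the stable letter -/

section Britton

open HNNExtension HNNExtension.NormalWord

variable {G : Type*} [Group G] {A B : Subgroup G} (φ : A ≃* B)

/-- An element of the associated subgroup on the left of `t ^ u` can be moved to its right. -/
lemma of_mul_t_zpow (u : ℤˣ) (h : G) (hh : h ∈ toSubgroup A B (-u)) :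
    ∃ h' : G, (of h : HNNExtension G A B φ) * t ^ (u : ℤ) = t ^ (u : ℤ) * of h' := by
  rcases Int.units_eq_one_or u with rfl | rfl
  · exact ⟨φ.symm ⟨h, hh⟩, by simpa using of_mul_t (φ := φ) ⟨h, hh⟩⟩
  · exact ⟨φ ⟨h, by simpa using hh⟩,
      by simpa using of_mul_inv_t (φ := φ) ⟨h, by simpa using hh⟩⟩

/-- Left multiplication by a power of `t ^ v` keeps a word with head `h` reduced, provided the
`t ^ v` next to `h` does not cancel with the first letter of the word. -/
lemma isChain_replicate_append (v : ℤˣ) (h : G) (l : List (ℤˣ × G)) (k : ℕ)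
    (hl : l.IsChain (fun a b => a.2 ∈ toSubgroup A B a.1 → a.1 = b.1))
    (hd : ∀ p ∈ l.head?, h ∈ toSubgroup A B v → v = p.1) :
    (List.replicate k (v, (1 : G)) ++ (v, h) :: l).IsChain
      (fun a b => a.2 ∈ toSubgroup A B a.1 → a.1 = b.1) := by
  induction k with
  | zero => simpa using List.isChain_cons.2 ⟨hd, hl⟩
  | succ k ih =>
    rw [List.replicate_succ, List.cons_append, List.isChain_cons]
    refine ⟨?_, ih⟩
    intro p hp _
    cases k with
    | zero => simp at hp; simp [← hp]
    | succ k => simp [List.replicate_succ] at hp; simp [← hp]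

/-- An element commuting with a nontrivial power of the stable letter `t` is a power of `t` times
an element of the base group. In terms of the Bass–Serre tree: such an element preserves the axis
of `t`, so it moves the base vertex along this axis. The proof is by induction on the length of
a reduced word `h t^u g₁ ⋯` for `g`. If `h` can be moved across `t ^ u`, then `t ^ (-u) * g` has a
shorter word. If not, and `v` is the last sign, then `t ^ (v * N) * g` and `g * t ^ (v * N)` are both
reduced as written, and comparing their beginnings by Britton's lemma shows that `h` could be
moved after all. -/
theorem exists_eq_t_zpow_mul_of (g : HNNExtension G A B φ) (N : ℕ) (hN : N ≠ 0)
    (hg : Commute g (t ^ N)) : ∃ (l : ℤ) (h : G), g = t ^ l * of h := by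
  obtain ⟨k, rfl⟩ := Nat.exists_eq_succ_of_ne_zero hN
  obtain ⟨w, rfl⟩ : ∃ w : ReducedWord G A B, w.prod φ = g := by
    obtain ⟨d⟩ := TransversalPair.nonempty G A B
    exact ⟨(equiv φ d g).toReducedWord, (equiv φ d).symm_apply_apply g⟩
  obtain ⟨h, L, hL⟩ := w
  induction L generalizing h with
  | nil => exact ⟨0, h, by simp [ReducedWord.prod]⟩
  | cons p L ih =>
    obtain ⟨u, g₁⟩ := p
    by_cases hmem : h ∈ toSubgroup A B (-u)
    · obtain ⟨h', hh'⟩ := of_mul_t_zpow φ u h hmem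
      have hprod : ReducedWord.prod φ ⟨h, (u, g₁) :: L, hL⟩ =
          t ^ (u : ℤ) * ReducedWord.prod φ ⟨h' * g₁, L, (List.isChain_cons.1 hL).2⟩ := by
        simp only [ReducedWord.prod, List.map_cons, List.prod_cons, map_mul, ← mul_assoc, hh']
      have hc : Commute (ReducedWord.prod φ ⟨h' * g₁, L, (List.isChain_cons.1 hL).2⟩)
          (t ^ (k + 1)) := by
        rw [eq_inv_mul_of_mul_eq hprod.symm]
        refine Commute.mul_left ?_ hg
        exact (((Commute.refl t).zpow_left _).inv_left).pow_right _
      obtain ⟨l, h'', hl⟩ := ih _ _ hc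
      exact ⟨u + l, h'', by rw [hprod, hl, zpow_add, mul_assoc]⟩
    · exfalso
      -- `v` is the sign of the last letter, so that the word stays reduced on appending `t ^ v`.
      obtain ⟨v, hv⟩ : ∃ v, ∀ p ∈ ((u, g₁) :: L).getLast?, p.1 = v :=
        ⟨(((u, g₁) :: L).getLast (by simp)).1, fun p hp => by
          rw [List.getLast?_eq_some_getLast (by simp), Option.mem_some_iff] at hp
          rw [hp]⟩
      let w₁ : ReducedWord G A B := ⟨1, List.replicate k (v, 1) ++ (v, h) :: (u, g₁) :: L,
        isChain_replicate_append v h _ k hL (by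
          intro p hp hh
          simp only [List.head?_cons, Option.mem_some_iff] at hp
          subst hp
          rcases eq_or_ne v u with rfl | hvu
          · rfl
          · exact absurd (by rwa [← Int.units_ne_iff_eq_neg.1 hvu]) hmem)⟩
      let w₂ : ReducedWord G A B := ⟨h, ((u, g₁) :: L) ++ List.replicate (k + 1) (v, 1), by
        refine List.isChain_append.2 ⟨hL, ?_, ?_⟩
        · exact List.isChain_replicate_of_rel _ (fun _ => rfl)
        · intro p hp q hq _
          simp only [List.replicate_succ, List.head?_cons, Option.mem_some_iff] at hq
          rw [hv p hp, ← hq]⟩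
      have e₁ : w₁.prod φ = (t ^ (v : ℤ)) ^ (k + 1) * ReducedWord.prod φ ⟨h, (u, g₁) :: L, hL⟩ := by
        simp [w₁, ReducedWord.prod, pow_succ, mul_assoc]
      have e₂ : w₂.prod φ = ReducedWord.prod φ ⟨h, (u, g₁) :: L, hL⟩ * (t ^ (v : ℤ)) ^ (k + 1) := by
        simp only [w₂, ReducedWord.prod, List.map_append, List.prod_append, List.map_replicate,
          List.prod_replicate, map_one, mul_one, mul_assoc]
      have e : w₁.prod φ = w₂.prod φ := by
        rw [e₁, e₂, ← zpow_natCast, ← zpow_mul, mul_comm (v : ℤ), zpow_mul, zpow_natCast]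
        exact (hg.zpow_right _).symm
      have key := ReducedWord.map_fst_eq_and_of_prod_eq φ e
      have hhead : w₁.toList.head?.map Prod.fst = some v := by
        cases k <;> simp [w₁, List.replicate_succ]
      have huv : u = v := by
        have := congrArg List.head? key.1
        rw [List.head?_map, hhead] at this
        simpa [w₂] using this.symm
      apply hmem
      have := key.2 v hhead
      simpa [w₁, w₂, huv] using this

end Britton

/-! ### Baumslag–Solitar groups -/

section BaumslagSolitar

lemma bs_rel (m n : ℤ) : (bt m n)⁻¹ * bs m n ^ m * bt m n = bs m n ^ n := by
  have h := mk_rel_eq_one (rels := bsRels m n)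
    (r := (FreeGroup.of BGen.t)⁻¹ * (FreeGroup.of BGen.s) ^ m * FreeGroup.of BGen.t *
      ((FreeGroup.of BGen.s) ^ n)⁻¹) rfl
  rw [← mul_inv_eq_one]
  simpa [bs, bt, PresentedGroup.of, map_mul, map_inv, map_zpow] using h

/-- The homomorphism `BS(m,n) → H` determined by images `s`, `t` of the generators satisfying
the defining relation. -/
def bsLift {H : Type*} [Group H] {m n : ℤ} (s t : H) (h : t⁻¹ * s ^ m * t = s ^ n) :
    BS m n →* H :=
  PresentedGroup.toGroup
    (f := fun g => match g with | BGen.s => s | BGen.t => t)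
    (by
      rintro r hr
      rw [bsRels, Set.mem_singleton_iff] at hr
      subst hr
      simp [h])

@[simp]
lemma bsLift_bs {H : Type*} [Group H] {m n : ℤ} (s t : H) (h : t⁻¹ * s ^ m * t = s ^ n) :
    bsLift s t h (bs m n) = s :=
  PresentedGroup.toGroup.of _

@[simp]
lemma bsLift_bt {H : Type*} [Group H] {m n : ℤ} (s t : H) (h : t⁻¹ * s ^ m * t = s ^ n) :
    bsLift s t h (bt m n) = t :=
  PresentedGroup.toGroup.of _

lemma bs_hom_ext {H : Type*} [Group H] {m n : ℤ} {f g : BS m n →* H}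
    (hs : f (bs m n) = g (bs m n)) (ht : f (bt m n) = g (bt m n)) : f = g := by
  refine PresentedGroup.ext ?_
  rintro (_ | _)
  · exact hs
  · exact ht

/-- The exponent sum of the stable letter `t`. -/
def tExp (m n : ℤ) : BS m n →* Multiplicative ℤ :=
  bsLift 1 (Multiplicative.ofAdd 1) (by simp)

@[simp]
lemma tExp_bs (m n : ℤ) : tExp m n (bs m n) = 1 := bsLift_bs _ _ _

@[simp]
lemma tExp_bt (m n : ℤ) : tExp m n (bt m n) = Multiplicative.ofAdd 1 := bsLift_bt _ _ _

lemma addRight_one_zpow (k : ℤ) (v : ℚ) : (Equiv.addRight (1 : ℚ) ^ k) v = v + k := by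
  induction k generalizing v with
  | zero => simp
  | succ k ih => rw [zpow_add_one, Equiv.Perm.mul_apply, ih]; simp; ring
  | pred k ih =>
    have : (Equiv.addRight (1 : ℚ))⁻¹ v = v - 1 := by
      rw [Equiv.Perm.inv_eq_iff_eq]; simp
    rw [zpow_sub_one, Equiv.Perm.mul_apply, ih, this]; push_cast; ring

/-- The affine action of `BS(m,n)` on `ℚ`: `s` is the translation by `1` and `t` is the
multiplication by `m / n`. -/
def affineRep {m n : ℤ} (hm : m ≠ 0) (hn : n ≠ 0) : BS m n →* Equiv.Perm ℚ :=
  bsLift (Equiv.addRight 1)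
    (Equiv.mulRight₀ ((m : ℚ) / n) (div_ne_zero (by exact_mod_cast hm) (by exact_mod_cast hn)))
    (by
      have hm' : (m : ℚ) ≠ 0 := by exact_mod_cast hm
      have hn' : (n : ℚ) ≠ 0 := by exact_mod_cast hn
      rw [mul_assoc, inv_mul_eq_iff_eq_mul]
      ext v
      simp only [Equiv.Perm.mul_apply, addRight_one_zpow, Equiv.mulRight₀_apply]
      field_simp)

lemma affineRep_bs_zpow {m n : ℤ} (hm : m ≠ 0) (hn : n ≠ 0) (k : ℤ) (v : ℚ) :
    affineRep hm hn (bs m n ^ k) v = v + k := by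
  rw [map_zpow, affineRep, bsLift_bs, addRight_one_zpow]

lemma affineRep_bt_zpow {m n : ℤ} (hm : m ≠ 0) (hn : n ≠ 0) (k : ℤ) (v : ℚ) :
    affineRep hm hn (bt m n ^ k) v = v * ((m : ℚ) / n) ^ k := by
  have hq : (m : ℚ) / n ≠ 0 := div_ne_zero (by exact_mod_cast hm) (by exact_mod_cast hn)
  have key : ∀ v, affineRep hm hn (bt m n) v = v * ((m : ℚ) / n) := by
    intro v
    rw [affineRep, bsLift_bt]
    simp
  induction k generalizing v with
  | zero => simp
  | succ k ih => rw [zpow_add_one, map_mul, Equiv.Perm.mul_apply, key, ih, zpow_add_one₀ hq]; ring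
  | pred k ih =>
    rw [zpow_sub_one, map_mul, Equiv.Perm.mul_apply, ih, zpow_sub_one₀ hq, map_inv]
    have : (affineRep hm hn (bt m n))⁻¹ v = v * ((m : ℚ) / n)⁻¹ := by
      rw [Equiv.Perm.inv_eq_iff_eq, key, inv_mul_cancel_right₀ hq]
    rw [this]; ring

lemma bt_zpow_mul_bs_zpow_eq_one {m n : ℤ} (hm : m ≠ 0) (hn : n ≠ 0) {l k : ℤ}
    (h : bt m n ^ l * bs m n ^ k = 1) : l = 0 ∧ k = 0 := by
  have hl : l = 0 := by
    have := congrArg (fun g => Multiplicative.toAdd (tExp m n g)) h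
    simpa using this
  subst hl
  have := congrArg (fun g => affineRep hm hn g 0) h
  simp only [zpow_zero, one_mul, affineRep_bs_zpow] at this
  exact ⟨rfl, by simpa using this⟩

lemma abs_eq_of_commute {m n : ℤ} (hm : m ≠ 0) (hn : n ≠ 0) {k N : ℤ} (hk : k ≠ 0) (hN : N ≠ 0)
    (h : Commute (bs m n ^ k) (bt m n ^ N)) : |m| = |n| := by
  have := congrArg (fun g => affineRep hm hn g 0) h.eq
  simp only [map_mul, Equiv.Perm.mul_apply, affineRep_bs_zpow, affineRep_bt_zpow, zero_mul,
    zero_add] at this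
  have hk' : (k : ℚ) ≠ 0 := by exact_mod_cast hk
  have h1 : ((m : ℚ) / n) ^ N = 1 := by
    have : (k : ℚ) * ((m : ℚ) / n) ^ N = k * 1 := by rw [← this, mul_one]
    exact mul_left_cancel₀ hk' this
  have h2 : |(m : ℚ) / n| ^ N = 1 := by rw [← abs_zpow, h1, abs_one]
  have h3 : |(m : ℚ) / n| = 1 := by
    by_contra hne
    exact hN ((zpow_eq_one_iff_right₀ (abs_nonneg _) hne).1 h2)
  rw [abs_div, div_eq_one_iff_eq (by simpa using hn)] at h3
  exact_mod_cast h3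

lemma mem_zpowers_gen {G : Type*} [Group G] (g : G) (x : Subgroup.zpowers g) :
    x ∈ Subgroup.zpowers (⟨g, Subgroup.mem_zpowers g⟩ : Subgroup.zpowers g) := by
  obtain ⟨_, k, rfl⟩ := x
  exact ⟨k, by ext; simp⟩

lemma orderOf_ofAdd {n : ℤ} (hn : n ≠ 0) : orderOf (Multiplicative.ofAdd n) = 0 := by
  rw [orderOf_eq_zero_iff']
  intro k hk h
  have := congrArg Multiplicative.toAdd h
  simp at this
  omega

/-- The isomorphism `nℤ ≃ mℤ` sending `n` to `m`, both nonzero. -/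
noncomputable def zpowersEquiv {m n : ℤ} (hm : m ≠ 0) (hn : n ≠ 0) :
    Subgroup.zpowers (Multiplicative.ofAdd n) ≃* Subgroup.zpowers (Multiplicative.ofAdd m) :=
  mulEquivOfOrderOfEq (mem_zpowers_gen _) (mem_zpowers_gen _) (by
    rw [Subgroup.orderOf_mk, Subgroup.orderOf_mk, orderOf_ofAdd hm, orderOf_ofAdd hn])

lemma zpowersEquiv_gen {m n : ℤ} (hm : m ≠ 0) (hn : n ≠ 0) :
    zpowersEquiv hm hn ⟨Multiplicative.ofAdd n, Subgroup.mem_zpowers _⟩ =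
      ⟨Multiplicative.ofAdd m, Subgroup.mem_zpowers _⟩ :=
  mulEquivOfOrderOfEq_apply_gen _ _ _

lemma conj_zpow_mul {G : Type*} [Group G] {s t : G} {m n : ℤ} (h : t⁻¹ * s ^ m * t = s ^ n)
    (j : ℤ) : t⁻¹ * s ^ (m * j) * t = s ^ (n * j) := by
  have := conj_zpow (a := t⁻¹) (b := s ^ m) (i := j)
  rw [inv_inv, h] at this
  rw [zpow_mul, zpow_mul, this]

/-- An element of `BS(m,n)` commuting with a nontrivial power of `t` lies in `⟨t⟩⟨s⟩`. This is
`exists_eq_t_zpow_mul_of`, transported through the description of `BS(m,n)` as an HNN extension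
of `⟨s⟩ ≅ ℤ`. -/
theorem exists_eq_bt_zpow_mul_bs_zpow {m n : ℤ} (hm : m ≠ 0) (hn : n ≠ 0) (g : BS m n) {N : ℤ}
    (hN : N ≠ 0) (hg : Commute g (bt m n ^ N)) : ∃ l k : ℤ, g = bt m n ^ l * bs m n ^ k := by
  have hrel : (HNNExtension.t (φ := zpowersEquiv hm hn))⁻¹ *
      HNNExtension.of (Multiplicative.ofAdd 1) ^ m * HNNExtension.t =
      HNNExtension.of (Multiplicative.ofAdd 1) ^ n := by
    have := HNNExtension.t_mul_of (φ := zpowersEquiv hm hn)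
      ⟨Multiplicative.ofAdd n, Subgroup.mem_zpowers _⟩
    rw [zpowersEquiv_gen] at this
    rw [mul_assoc, inv_mul_eq_iff_eq_mul,
      ← map_zpow HNNExtension.of, ← map_zpow HNNExtension.of, ← ofAdd_zsmul, ← ofAdd_zsmul]
    simpa using this.symm
  let F : BS m n →* HNNExtension _ _ _ (zpowersEquiv hm hn) := bsLift _ _ hrel
  let B : HNNExtension _ _ _ (zpowersEquiv hm hn) →* BS m n :=
    HNNExtension.lift (zpowersHom _ (bs m n)) (bt m n) (by
      intro x
      obtain ⟨j, rfl⟩ := mem_zpowers_gen _ x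
      have := conj_zpow_mul (bs_rel m n) j
      rw [mul_assoc, inv_mul_eq_iff_eq_mul] at this
      rw [map_zpow, zpowersEquiv_gen]
      simp only [SubgroupClass.coe_zpow, ← ofAdd_zsmul, zpowersHom_apply, toAdd_ofAdd, smul_eq_mul]
      rw [mul_comm j n, mul_comm j m, this])
  have hBF : ∀ g, B (F g) = g := by
    intro g
    have : B.comp F = MonoidHom.id _ := bs_hom_ext (by simp [B, F]) (by simp [B, F])
    exact DFunLike.congr_fun this g
  have hc : Commute (F g) (HNNExtension.t ^ N.natAbs) := by
    have h1 : Commute (F g) (HNNExtension.t ^ N) := by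
      have := hg.map F
      simpa [F] using this
    rcases Int.natAbs_eq N with h | h
    · rw [h, zpow_natCast] at h1
      simpa using h1
    · rw [h, zpow_neg, zpow_natCast] at h1
      simpa using h1
  obtain ⟨l, h, hl⟩ := exists_eq_t_zpow_mul_of _ (F g) N.natAbs (by simpa using hN) hc
  refine ⟨l, Multiplicative.toAdd h, ?_⟩
  rw [← hBF g, hl]
  simp [B]

end BaumslagSolitar

/-! ### Pairs of elements generating a Baumslag–Solitar group -/

section Pairs

variable {G : Type*} [Group G]

/-- The elements `s`, `t` of `G` generate a copy of `BS(m,n)`, with `m` and `n` nonzero: the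
homomorphism from `BS(m,n)` taking the standard generators to `s`, `t` is defined and injective. -/
def IsBSPair (s t : G) (m n : ℤ) : Prop :=
  m ≠ 0 ∧ n ≠ 0 ∧
    ∃ φ : BS m n →* G, Function.Injective φ ∧ φ (bs m n) = s ∧ φ (bt m n) = t

namespace IsBSPair

variable {s t : G} {m n : ℤ}

lemma rel (h : IsBSPair s t m n) : t⁻¹ * s ^ m * t = s ^ n := by
  obtain ⟨-, -, φ, -, rfl, rfl⟩ := h
  simpa using congrArg φ (bs_rel m n)

lemma eq_zero_of_eq_one (h : IsBSPair s t m n) {l k : ℤ} (hlk : t ^ l * s ^ k = 1) :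
    l = 0 ∧ k = 0 := by
  obtain ⟨hm, hn, φ, hφ, rfl, rfl⟩ := h
  exact bt_zpow_mul_bs_zpow_eq_one hm hn (hφ (by simpa using hlk))

lemma abs_eq (h : IsBSPair s t m n) {k N : ℤ} (hk : k ≠ 0) (hN : N ≠ 0)
    (hc : Commute (s ^ k) (t ^ N)) : |m| = |n| := by
  obtain ⟨hm, hn, φ, hφ, rfl, rfl⟩ := h
  exact abs_eq_of_commute hm hn hk hN (hφ (by simpa using hc.eq))

/-- Only relations with exponent sum zero in `t` hold; this is the shape needed in
`eq_zero_of_neg`. -/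
lemma add_eq_zero (h : IsBSPair s t m n) {i j k l : ℤ}
    (hr : t ^ i * s ^ j * t ^ k * s ^ l = 1) : i + k = 0 := by
  obtain ⟨hm, hn, φ, hφ, rfl, rfl⟩ := h
  have h1 : bt m n ^ i * bs m n ^ j * bt m n ^ k * bs m n ^ l = 1 := hφ (by simpa using hr)
  have := congrArg (fun g => Multiplicative.toAdd (tExp m n g)) h1
  simpa using this

/-- If an element of `⟨s, t⟩` conjugates a nontrivial power of `t` to a power of `t`, then the two
exponents agree, and the element lies in `⟨t⟩⟨s⟩`. -/
lemma of_conj_t (h : IsBSPair s t m n) {g : G} (hg : g ∈ Subgroup.closure {s, t}) {N M : ℤ}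
    (hN : N ≠ 0) (hc : t ^ N * g = g * t ^ M) : N = M ∧ ∃ l k : ℤ, g = t ^ l * s ^ k := by
  obtain ⟨hm, hn, φ, hφ, rfl, rfl⟩ := h
  have hle : Subgroup.closure {φ (bs m n), φ (bt m n)} ≤ φ.range := by
    rw [Subgroup.closure_le]
    rintro _ (rfl | rfl)
    · exact ⟨_, rfl⟩
    · exact ⟨_, rfl⟩
  obtain ⟨γ, rfl⟩ := hle hg
  have h1 : bt m n ^ N * γ = γ * bt m n ^ M := hφ (by simpa using hc)
  have hNM : N = M := by
    have := congrArg (fun g => Multiplicative.toAdd (tExp m n g)) h1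
    simp at this
    linarith
  subst hNM
  obtain ⟨l, k, hlk⟩ := exists_eq_bt_zpow_mul_bs_zpow hm hn γ hN h1.symm
  exact ⟨rfl, l, k, by rw [hlk]; simp⟩

/-- The cyclic subgroup `⟨s⟩` is commensurated by `⟨s, t⟩`. -/
lemma exists_conj_s (h : IsBSPair s t m n) {g : G} (hg : g ∈ Subgroup.closure {s, t}) :
    ∃ N M : ℤ, N ≠ 0 ∧ M ≠ 0 ∧ s ^ N * g = g * s ^ M := by
  induction hg using Subgroup.closure_induction with
  | mem x hx =>
    rcases hx with rfl | rfl
    · exact ⟨1, 1, one_ne_zero, one_ne_zero, by simp⟩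
    · refine ⟨m, n, h.1, h.2.1, ?_⟩
      have := h.rel
      rwa [mul_assoc, inv_mul_eq_iff_eq_mul] at this
  | one => exact ⟨1, 1, one_ne_zero, one_ne_zero, by simp⟩
  | mul x y _ _ ihx ihy =>
    obtain ⟨N, M, hN, hM, h1⟩ := ihx
    obtain ⟨N', M', hN', hM', h2⟩ := ihy
    refine ⟨N * N', M' * M, mul_ne_zero hN hN', mul_ne_zero hM' hM, ?_⟩
    have h3 : SemiconjBy x (s ^ M) (s ^ N) := h1.symm
    have h4 : SemiconjBy y (s ^ M') (s ^ N') := h2.symm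
    have h5 := h3.zpow_right N'
    have h6 := h4.zpow_right M
    rw [← zpow_mul, ← zpow_mul] at h5 h6
    rw [mul_comm N' M] at h6
    exact (h5.mul_left h6).eq.symm
  | inv x _ ih =>
    obtain ⟨N, M, hN, hM, h1⟩ := ih
    refine ⟨M, N, hM, hN, ?_⟩
    have h3 : SemiconjBy x (s ^ M) (s ^ N) := h1.symm
    exact (SemiconjBy.inv_symm_left h3).eq.symm

/-- When `|m| = |n|`, every power of `t` centralizes or inverts the powers of `s ^ m`. -/
lemma conj_or (h : IsBSPair s t m n) (hmn : |m| = |n|) {p : ℤ} (hp : m ∣ p) (j : ℤ) :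
    t ^ j * s ^ p = s ^ p * t ^ j ∨ t ^ j * s ^ p = s ^ (-p) * t ^ j := by
  obtain ⟨i, rfl⟩ := hp
  have h1 := conj_zpow_mul h.rel i
  rcases abs_eq_abs.1 hmn with rfl | rfl
  · left
    have : SemiconjBy t (s ^ (m * i)) (s ^ (m * i)) := by
      rw [mul_assoc, inv_mul_eq_iff_eq_mul] at h1
      exact h1.symm
    exact (Commute.zpow_left this j).eq
  · have h2 : SemiconjBy t (s ^ (n * i)) (s ^ (-(n * i))) := by
      rw [mul_assoc, inv_mul_eq_iff_eq_mul] at h1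
      rw [← neg_mul]
      exact h1.symm
    have h3 : SemiconjBy t (s ^ (-(n * i))) (s ^ (n * i)) := by
      have := h2.inv_right
      rwa [← zpow_neg, ← zpow_neg, neg_neg] at this
    have h4 : Commute (t ^ 2) (s ^ (n * i)) := by
      rw [pow_two]; exact h3.mul_left h2
    have h5 (r : ℤ) : Commute (t ^ (r + r)) (s ^ (n * i)) := by
      rw [← two_mul, zpow_mul]
      exact Commute.zpow_left (by exact_mod_cast h4) r
    rw [neg_mul, neg_neg]
    rcases Int.even_or_odd' j with ⟨r, rfl | rfl⟩
    · left
      rw [zpow_neg, two_mul]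
      exact (h5 r).inv_right.eq
    · right
      rw [two_mul, zpow_add_one]
      have h6 : SemiconjBy (t ^ (r + r)) (s ^ (n * i)) (s ^ (n * i)) := h5 r
      exact (h6.mul_left h3).eq

lemma commute_zpow (h : IsBSPair s t m n) (hmn : |m| = |n|) {p q : ℤ} (hp : m ∣ p) (hq : 2 ∣ q) :
    Commute (s ^ p) (t ^ q) := by
  obtain ⟨r, rfl⟩ := hq
  rw [mul_comm 2 r, zpow_mul]
  rcases h.conj_or hmn hp r with h1 | h1
  · exact Commute.zpow_right (show Commute _ _ from h1.symm) 2
  · have h2 : SemiconjBy (t ^ r) (s ^ p) (s ^ (-p)) := h1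
    have h3 : SemiconjBy (t ^ r) (s ^ (-p)) (s ^ p) := by
      have := h2.inv_right
      rwa [← zpow_neg, ← zpow_neg, neg_neg] at this
    have h4 : Commute ((t ^ r) ^ 2) (s ^ p) := by
      rw [pow_two]; exact h3.mul_left h2
    exact_mod_cast h4.symm

end IsBSPair

end Pairs

/-! ### Developable triangles -/

section Triangle

variable {G : Type*} [Group G] {x y z : G} {a b c d e f : ℤ}

/-- If `y` inverts `x ^ a`, then conjugating `x ^ p * y ^ q * z ^ r = 1` by `y` and multiplying
gives a relation in `⟨y, z⟩` with exponent sum `-2 * r` in `z`. -/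
lemma eq_zero_of_neg (hxy : IsBSPair x y a (-a)) (hyz : IsBSPair y z c d) (hcd : |c| = |d|)
    {p q r : ℤ} (hp : a ∣ p) (hq : c ∣ q) (hr : 2 ∣ r) (h : x ^ p * y ^ q * z ^ r = 1) :
    p = 0 ∧ q = 0 ∧ r = 0 := by
  have hc : Commute (y ^ q) (z ^ r) := hyz.commute_zpow hcd hq hr
  have h1 : x ^ p = z ^ (-r) * y ^ (-q) := by
    rw [mul_assoc, mul_eq_one_iff_eq_inv] at h
    rw [h, mul_inv_rev, zpow_neg, zpow_neg]
  have h2 : x ^ p = y ^ (-q) * z ^ (-r) := by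
    rw [mul_assoc, hc.eq, mul_eq_one_iff_eq_inv] at h
    rw [h, mul_inv_rev, zpow_neg, zpow_neg]
  obtain ⟨i, rfl⟩ := hp
  have h3 := conj_zpow_mul hxy.rel i
  rw [neg_mul, zpow_neg] at h3
  have hr0 : r = 0 := by
    have h4 : z ^ (-r) * y ^ (-q + -1 + -q) * z ^ (-r) * y ^ (1 : ℤ) = 1 := by
      calc _ = (z ^ (-r) * y ^ (-q)) * (y⁻¹ * (y ^ (-q) * z ^ (-r)) * y) := by
            rw [zpow_add, zpow_add, zpow_neg_one, zpow_one]; simp only [mul_assoc]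
        _ = 1 := by rw [← h1, ← h2, h3, mul_inv_cancel]
    have := hyz.add_eq_zero h4
    omega
  subst hr0
  have h5 : y ^ q * x ^ (a * i) = 1 := by rw [h1]; simp
  have := hxy.eq_zero_of_eq_one h5
  exact ⟨this.2, this.1, rfl⟩

/-- Three elements of `G` pairwise generating Baumslag–Solitar groups as in a developable triangle.
The last field records what the abelianization of the triangle group gives when each relation is
a commutation relation. -/
structure IsTriangle (x y z : G) (a b c d e f : ℤ) : Prop where
  xy : IsBSPair x y a b
  yz : IsBSPair y z c d
  zx : IsBSPair z x e f
  ab : a = b → c = d → e = f → ∀ p q r : ℤ, x ^ p * y ^ q * z ^ r = 1 → p = 0 ∧ q = 0 ∧ r = 0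

lemma rotate_eq_one {p q r : G} (h : p * q * r = 1) : q * r * p = 1 := by
  rw [mul_assoc] at h
  exact mul_eq_one_comm.1 h

namespace IsTriangle

lemma rotate (h : IsTriangle x y z a b c d e f) : IsTriangle y z x c d e f a b :=
  ⟨h.yz, h.zx, h.xy, fun h1 h2 h3 p q r hr => by
    have := h.ab h3 h1 h2 r p q (rotate_eq_one (rotate_eq_one hr))
    tauto⟩

/-- When `|a| = |b|`, `|c| = |d|`, `|e| = |f|`, sufficiently divisible powers of `x`, `y`, `z`
are independent. -/
lemma independent (h : IsTriangle x y z a b c d e f) (hab : |a| = |b|) (hcd : |c| = |d|)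
    (hef : |e| = |f|) {p q r : ℤ} (hp : 2 * a * c * e ∣ p) (hq : 2 * a * c * e ∣ q)
    (hr : 2 * a * c * e ∣ r) (hrel : x ^ p * y ^ q * z ^ r = 1) : p = 0 ∧ q = 0 ∧ r = 0 := by
  have d2 : 2 ∣ 2 * a * c * e := ⟨a * c * e, by ring⟩
  have da : a ∣ 2 * a * c * e := ⟨2 * c * e, by ring⟩
  have dc : c ∣ 2 * a * c * e := ⟨2 * a * e, by ring⟩
  have de : e ∣ 2 * a * c * e := ⟨2 * a * c, by ring⟩
  obtain ⟨hxy, hyz, hzx, hpos⟩ := h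
  rcases abs_eq_abs.1 hab.symm with rfl | rfl
  · rcases abs_eq_abs.1 hcd.symm with rfl | rfl
    · rcases abs_eq_abs.1 hef.symm with rfl | rfl
      · exact hpos rfl rfl rfl p q r hrel
      · have := eq_zero_of_neg hzx hxy hab (de.trans hr) (da.trans hp) (d2.trans hq)
          (rotate_eq_one (rotate_eq_one hrel))
        tauto
    · have := eq_zero_of_neg hyz hzx hef (dc.trans hq) (de.trans hr) (d2.trans hp)
        (rotate_eq_one hrel)
      tauto
  · exact eq_zero_of_neg hxy hyz hcd (da.trans hp) (dc.trans hq) (d2.trans hr) hrel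

/-- A power of `x` that lies in `⟨y, z⟩` and commutes with a nontrivial power of `y` is trivial.
Otherwise the centralizer statements in the three Baumslag–Solitar groups force
`|a| = |b|`, `|c| = |d|`, `|e| = |f|` and a relation among powers of `x`, `y`, `z` which
contradicts `independent`. -/
lemma eq_zero_of_zpow_mem (h : IsTriangle x y z a b c d e f) {k N : ℤ} (hN : N ≠ 0)
    (hk : x ^ k ∈ Subgroup.closure {y, z}) (hc : Commute (x ^ k) (y ^ N)) : k = 0 := by
  by_contra hk0
  have hab := h.xy.abs_eq hk0 hN hc
  -- Passing to the exponent `k * a` makes every power of `y` centralize or invert `x ^ κ`.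
  obtain ⟨κ, hκ, hκ0, hκa⟩ : ∃ κ : ℤ, κ = k * a ∧ κ ≠ 0 ∧ a ∣ κ :=
    ⟨k * a, rfl, mul_ne_zero hk0 h.xy.1, dvd_mul_left _ _⟩
  have hκm : x ^ κ ∈ Subgroup.closure {y, z} := by
    rw [hκ, zpow_mul]; exact zpow_mem hk a
  have hκc : Commute (x ^ κ) (y ^ N) := by
    rw [hκ, zpow_mul]; exact hc.zpow_left a
  have hxmem : x ^ κ ∈ Subgroup.closure {z, x} :=
    Subgroup.zpow_mem _ (Subgroup.subset_closure (by simp)) _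
  -- `x ^ κ` commensurates `⟨z⟩` and lies in `⟨y, z⟩`, hence it is `z ^ l * y ^ i`.
  obtain ⟨P, Q, hP, -, hPQ⟩ := h.zx.exists_conj_s hxmem
  obtain ⟨rfl, l, i, hli⟩ := h.yz.of_conj_t hκm hP hPQ
  have hef : |e| = |f| := h.zx.abs_eq hP hκ0 hPQ
  have hl0 : l ≠ 0 := by
    rintro rfl
    have : y ^ (-i) * x ^ κ = 1 := by rw [hli]; simp
    exact hκ0 (h.xy.eq_zero_of_eq_one this).2
  have hz : z ^ l = x ^ κ * y ^ (-i) := by rw [hli]; simp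
  have hcd : |c| = |d| := by
    refine h.yz.abs_eq hN hl0 ?_
    rw [hz]
    exact Commute.mul_right hκc.symm ((Commute.refl y).zpow_zpow _ _)
  -- `z ^ (2 * l)` is the product of commuting powers of `x` and `y`.
  obtain ⟨κ', hκ'a, hκ'⟩ : ∃ κ', a ∣ κ' ∧ z ^ (2 * l) = x ^ κ' * y ^ (2 * -i) := by
    have e1 : z ^ (2 * l) = x ^ κ * (y ^ (-i) * x ^ κ) * y ^ (-i) := by
      rw [two_mul, zpow_add, hz]; simp only [mul_assoc]
    rcases h.xy.conj_or hab hκa (-i) with h1 | h1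
    · refine ⟨κ + κ, dvd_add hκa hκa, ?_⟩
      rw [e1, h1, two_mul, zpow_add, zpow_add]; simp only [mul_assoc]
    · refine ⟨0, dvd_zero _, ?_⟩
      rw [e1, h1, two_mul, zpow_add, zpow_neg]; simp
  have hcomm : Commute (x ^ κ') (y ^ (2 * -i)) := h.xy.commute_zpow hab hκ'a ⟨_, rfl⟩
  have hM : z ^ (2 * l * (2 * a * c * e)) =
      x ^ (κ' * (2 * a * c * e)) * y ^ (2 * -i * (2 * a * c * e)) := by
    rw [zpow_mul, hκ', hcomm.mul_zpow, ← zpow_mul, ← zpow_mul]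
  have := h.independent hab hcd hef (p := κ' * (2 * a * c * e)) (q := 2 * -i * (2 * a * c * e))
    (r := -(2 * l * (2 * a * c * e))) (dvd_mul_left _ _) (dvd_mul_left _ _)
    ((dvd_mul_left _ _).neg_right) (by rw [← hM, zpow_neg, mul_inv_cancel])
  have hne : 2 * l * (2 * a * c * e) ≠ 0 := by
    have := h.xy.1
    have := h.yz.1
    have := h.zx.1
    positivity
  exact hne (neg_eq_zero.1 this.2.2)

/-- An element of `⟨x, y⟩ ∩ ⟨y, z⟩` commensurates `⟨y⟩`, because it lies in `⟨y, z⟩`; being in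
`⟨x, y⟩`, it therefore has the form `y ^ l * x ^ k`, and `eq_zero_of_zpow_mem` gives `k = 0`. -/
theorem closure_inf_closure (h : IsTriangle x y z a b c d e f) :
    Subgroup.closure {x, y} ⊓ Subgroup.closure {y, z} = Subgroup.zpowers y := by
  have hy : y ∈ Subgroup.closure {y, z} := Subgroup.subset_closure (by simp)
  apply le_antisymm
  · rintro g ⟨hg1, hg2⟩
    obtain ⟨N, M, hN, -, hNM⟩ := h.yz.exists_conj_s hg2
    obtain ⟨rfl, l, k, rfl⟩ := h.xy.of_conj_t hg1 hN hNM
    have hk : x ^ k = y ^ (-l) * (y ^ l * x ^ k) := by simp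
    have hk0 : k = 0 := by
      refine h.eq_zero_of_zpow_mem hN ?_ ?_
      · rw [hk]
        exact mul_mem (zpow_mem hy _) hg2
      · rw [hk]
        exact Commute.mul_left ((Commute.refl y).zpow_zpow _ _) (show Commute _ _ from hNM.symm)
    subst hk0
    exact ⟨l, by simp⟩
  · rw [Subgroup.zpowers_le]
    exact ⟨Subgroup.subset_closure (by simp), hy⟩

theorem exists_free_abelian (h : IsTriangle x y z a b c d e f) (hab : |a| = |b|) (hcd : |c| = |d|)
    (hef : |e| = |f|) : ∃ n : ℕ, 0 < n ∧
      Nonempty ((Subgroup.closure {x ^ n, y ^ n, z ^ n} : Subgroup G) ≃*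
        Multiplicative (ℤ × ℤ × ℤ)) := by
  have d2 : 2 ∣ 2 * a * c * e := ⟨a * c * e, by ring⟩
  have da : a ∣ 2 * a * c * e := ⟨2 * c * e, by ring⟩
  have dc : c ∣ 2 * a * c * e := ⟨2 * a * e, by ring⟩
  have de : e ∣ 2 * a * c * e := ⟨2 * a * c, by ring⟩
  obtain ⟨n, hn, hdvd⟩ : ∃ n : ℕ, 0 < n ∧ 2 * a * c * e ∣ (n : ℤ) := by
    refine ⟨(2 * a * c * e).natAbs, Int.natAbs_pos.2 ?_, Int.dvd_natAbs.2 dvd_rfl⟩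
    have := h.xy.1
    have := h.yz.1
    have := h.zx.1
    positivity
  refine ⟨n, hn, ?_⟩
  have cxy : Commute (x ^ n) (y ^ n) := by
    exact_mod_cast h.xy.commute_zpow hab (da.trans hdvd) (d2.trans hdvd)
  have cyz : Commute (y ^ n) (z ^ n) := by
    exact_mod_cast h.yz.commute_zpow hcd (dc.trans hdvd) (d2.trans hdvd)
  have czx : Commute (z ^ n) (x ^ n) := by
    exact_mod_cast h.zx.commute_zpow hef (de.trans hdvd) (d2.trans hdvd)
  let F : Multiplicative (ℤ × ℤ × ℤ) →* G := MonoidHom.mk'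
    (fun v => (x ^ n) ^ v.toAdd.1 * (y ^ n) ^ v.toAdd.2.1 * (z ^ n) ^ v.toAdd.2.2) (by
      intro v w
      simp only [toAdd_mul, Prod.fst_add, Prod.snd_add, zpow_add]
      have c1 := (cxy.symm.zpow_zpow v.toAdd.2.1 w.toAdd.1)
      have c2 := (czx.zpow_zpow v.toAdd.2.2 w.toAdd.1)
      have c3 := (cyz.symm.zpow_zpow v.toAdd.2.2 w.toAdd.2.1)
      symm
      calc _ = (x ^ n) ^ v.toAdd.1 * (y ^ n) ^ v.toAdd.2.1 *
              ((z ^ n) ^ v.toAdd.2.2 * (x ^ n) ^ w.toAdd.1) * (y ^ n) ^ w.toAdd.2.1 *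
              (z ^ n) ^ w.toAdd.2.2 := by simp only [mul_assoc]
        _ = (x ^ n) ^ v.toAdd.1 * ((y ^ n) ^ v.toAdd.2.1 * (x ^ n) ^ w.toAdd.1) *
              ((z ^ n) ^ v.toAdd.2.2 * (y ^ n) ^ w.toAdd.2.1) *
              (z ^ n) ^ w.toAdd.2.2 := by rw [c2.eq]; simp only [mul_assoc]
        _ = _ := by rw [c1.eq, c3.eq]; simp only [mul_assoc])
  have hF (v) : F v = (x ^ n) ^ v.toAdd.1 * (y ^ n) ^ v.toAdd.2.1 * (z ^ n) ^ v.toAdd.2.2 := rfl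
  have hinj : Function.Injective F := by
    rw [injective_iff_map_eq_one]
    intro v hv
    rw [hF] at hv
    simp only [← zpow_natCast, ← zpow_mul] at hv
    have := h.independent hab hcd hef (hdvd.mul_right _) (hdvd.mul_right _) (hdvd.mul_right _) hv
    have hn' : (n : ℤ) ≠ 0 := by exact_mod_cast hn.ne'
    simp only [mul_eq_zero, hn', false_or] at this
    apply Multiplicative.toAdd.injective
    ext
    · exact this.1
    · exact this.2.1
    · exact this.2.2
  have hrange : F.range = Subgroup.closure {x ^ n, y ^ n, z ^ n} := by
    apply le_antisymm
    · rintro _ ⟨v, rfl⟩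
      rw [hF]
      refine mul_mem (mul_mem ?_ ?_) ?_ <;>
        exact Subgroup.zpow_mem _ (Subgroup.subset_closure (by simp)) _
    · rw [Subgroup.closure_le]
      rintro _ (rfl | rfl | rfl)
      · exact ⟨Multiplicative.ofAdd (1, 0, 0), by simp [hF]⟩
      · exact ⟨Multiplicative.ofAdd (0, 1, 0), by simp [hF]⟩
      · exact ⟨Multiplicative.ofAdd (0, 0, 1), by simp [hF]⟩
  exact ⟨((MonoidHom.ofInjective hinj).trans (MulEquiv.subgroupCongr hrange)).symm⟩

end IsTriangle

end Triangle

/-- When every relation of the triangle group is a commutation relation, the exponent sums in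
`x`, `y`, `z` are well defined. -/
lemma tri_independent (a c e : ℤ) (p q r : ℤ)
    (h : gx a a c c e e ^ p * gy a a c c e e ^ q * gz a a c c e e ^ r = 1) :
    p = 0 ∧ q = 0 ∧ r = 0 := by
  let v : TGen → Multiplicative (ℤ × ℤ × ℤ) := fun g => match g with
    | TGen.x => Multiplicative.ofAdd (1, 0, 0)
    | TGen.y => Multiplicative.ofAdd (0, 1, 0)
    | TGen.z => Multiplicative.ofAdd (0, 0, 1)
  let F : TriG a a c c e e →* Multiplicative (ℤ × ℤ × ℤ) := PresentedGroup.toGroup (f := v) (by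
    rintro _ (rfl | rfl | rfl) <;> simp [mul_comm])
  have hx : F (gx a a c c e e) = v TGen.x := PresentedGroup.toGroup.of _
  have hy : F (gy a a c c e e) = v TGen.y := PresentedGroup.toGroup.of _
  have hz : F (gz a a c c e e) = v TGen.z := PresentedGroup.toGroup.of _
  have := congrArg (fun g => Multiplicative.toAdd (F g)) h
  simpa [hx, hy, hz, v, Prod.ext_iff] using this

lemma isTriangle_of_developable {a b c d e f : ℤ}
    (ha : a ≠ 0) (hb : b ≠ 0) (hc : c ≠ 0) (hd : d ≠ 0) (he : e ≠ 0) (hf : f ≠ 0)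
    (hdev : Developable a b c d e f) :
    IsTriangle (gx a b c d e f) (gy a b c d e f) (gz a b c d e f) a b c d e f where
  xy := ⟨ha, hb, bsToXY a b c d e f, hdev.1, PresentedGroup.toGroup.of _,
    PresentedGroup.toGroup.of _⟩
  yz := ⟨hc, hd, bsToYZ a b c d e f, hdev.2.1, PresentedGroup.toGroup.of _,
    PresentedGroup.toGroup.of _⟩
  zx := ⟨he, hf, bsToZX a b c d e f, hdev.2.2, PresentedGroup.toGroup.of _,
    PresentedGroup.toGroup.of _⟩
  ab := by
    rintro rfl rfl rfl p q r h
    exact tri_independent _ _ _ p q r h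

end TriangleBS

/-- In a developable triangle `G(a,b;c,d;e,f)`: (i) the vertex groups pairwise
intersect in the common edge group, for all three cyclic permutations; (ii) if
`|a| = |b|`, `|c| = |d|` and `|e| = |f|`, then some powers of `x`, `y`, `z`
generate a subgroup isomorphic to `ℤ³`. -/
theorem developable_intersections (a b c d e f : ℤ)
    (ha : a ≠ 0) (hb : b ≠ 0) (hc : c ≠ 0) (hd : d ≠ 0) (he : e ≠ 0) (hf : f ≠ 0)
    (hdev : Developable a b c d e f) :
    (Subgroup.closure {gx a b c d e f, gy a b c d e f} ⊓
        Subgroup.closure {gy a b c d e f, gz a b c d e f} =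
        Subgroup.zpowers (gy a b c d e f) ∧
      Subgroup.closure {gy a b c d e f, gz a b c d e f} ⊓
        Subgroup.closure {gz a b c d e f, gx a b c d e f} =
        Subgroup.zpowers (gz a b c d e f) ∧
      Subgroup.closure {gz a b c d e f, gx a b c d e f} ⊓
        Subgroup.closure {gx a b c d e f, gy a b c d e f} =
        Subgroup.zpowers (gx a b c d e f)) ∧
    (|a| = |b| → |c| = |d| → |e| = |f| →
      ∃ i j k : ℕ, 0 < i ∧ 0 < j ∧ 0 < k ∧
        Nonempty ((Subgroup.closure {gx a b c d e f ^ i, gy a b c d e f ^ j,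
          gz a b c d e f ^ k} : Subgroup (TriG a b c d e f)) ≃*
            Multiplicative (ℤ × ℤ × ℤ))) := by
  have h := TriangleBS.isTriangle_of_developable ha hb hc hd he hf hdev
  refine ⟨⟨h.closure_inf_closure, h.rotate.closure_inf_closure,
    h.rotate.rotate.closure_inf_closure⟩, fun hab hcd hef => ?_⟩
  obtain ⟨n, hn, hfree⟩ := h.exists_free_abelian hab hcd hef
  exact ⟨n, n, n, hn, hn, hn, hfree⟩
end

section
/- Let a, b, c, d, e, f be nonzero integers with gcd(a,b) = gcd(c,d) = gcd(e,f) = 1, a < b, c < d, e < f. Let H be any group and φ : G(a,b;c,d;e,f) → H a homomorphism such that φ(x), φ(y), φ(z) each have finite order. Then φ(x)^{(b-a)²(b^{d-c}-a^{d-c})} = 1, φ(y)^{(d-c)²(d^{f-e}-c^{f-e})} = 1, and φ(z)^{(f-e)²(f^{b-a}-e^{b-a})} = 1. -/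
section BaumslagSolitar

variable {H : Type*} [Group H]

/-- An element `x` of finite order with `y⁻¹ x^a y = x^b` and `a, b` coprime has order prime to
`a`, so `x` is a power of `x^a` and `y` conjugates `x` to a power of itself. -/
lemma exists_nat_conj {x y : H} {a b : ℤ} (hx : IsOfFinOrder x) (hab : Int.gcd a b = 1)
    (h : y⁻¹ * x ^ a * y = x ^ b) : ∃ r : ℕ, y⁻¹ * x * y = x ^ r := by
  have hconj : ∀ n : ℤ, y⁻¹ * x ^ (a * n) * y = x ^ (b * n) := by
    intro n
    have := conj_zpow (i := n) (a := y⁻¹) (b := x ^ a)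
    rw [inv_inv, h] at this
    rw [zpow_mul, zpow_mul, this]
  have hl0 : (orderOf x : ℤ) ≠ 0 := by exact_mod_cast hx.orderOf_pos.ne'
  have hco : IsCoprime a (orderOf x : ℤ) := by
    rw [Int.isCoprime_iff_gcd_eq_one]
    obtain ⟨m, hm⟩ : ((Int.gcd a (orderOf x) : ℕ) : ℤ) ∣ orderOf x := Int.gcd_dvd_right _ _
    obtain ⟨k, hk⟩ : ((Int.gcd a (orderOf x) : ℕ) : ℤ) ∣ a := Int.gcd_dvd_left _ _
    set g : ℕ := Int.gcd a (orderOf x)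
    have h1 : x ^ (a * m) = 1 := by
      rw [← orderOf_dvd_iff_zpow_eq_one]
      exact ⟨k, by rw [hm, hk]; ring⟩
    have h2 : x ^ (b * m) = 1 := by rw [← hconj, h1]; group
    rw [← orderOf_dvd_iff_zpow_eq_one, hm] at h2
    have hm0 : m ≠ 0 := by rintro rfl; exact hl0 (by rw [hm, mul_zero])
    have h3 : (g : ℤ) ∣ b := Int.dvd_of_mul_dvd_mul_right hm0 h2
    have h4 : (g : ℤ) ∣ Int.gcd a b := Int.dvd_coe_gcd ⟨k, hk⟩ h3
    rw [hab] at h4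
    exact_mod_cast Int.eq_one_of_dvd_one (by positivity) h4
  obtain ⟨u, v, huv⟩ := hco
  have hxu : x = x ^ (a * u) := by
    have : a * u = 1 + orderOf x * (-v) := by linarith
    rw [this, zpow_add, zpow_mul x (orderOf x : ℤ), zpow_natCast x (orderOf x), pow_orderOf_eq_one]
    simp
  have hy : y⁻¹ * x * y ∈ Subgroup.zpowers x := by
    rw [hxu, hconj, ← hxu]
    exact Subgroup.zpow_mem_zpowers _ _
  rw [← hx.mem_powers_iff_mem_zpowers] at hy
  obtain ⟨r, hr⟩ := hy
  exact ⟨r, hr.symm⟩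

lemma conj_pow_zpow {x y : H} {r : ℕ} (h : y⁻¹ * x * y = x ^ r) (k : ℕ) (i : ℤ) :
    (y ^ k)⁻¹ * x ^ i * y ^ k = x ^ (i * (r : ℤ) ^ k) := by
  have hi : ∀ i : ℤ, y⁻¹ * x ^ i * y = x ^ (i * (r : ℤ)) := by
    intro i
    have := conj_zpow (i := i) (a := y⁻¹) (b := x)
    rw [inv_inv, h] at this
    rw [← this, mul_comm, zpow_mul, zpow_natCast]
  induction k with
  | zero => simp
  | succ k ih =>
    calc (y ^ (k + 1))⁻¹ * x ^ i * y ^ (k + 1)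
        = y⁻¹ * ((y ^ k)⁻¹ * x ^ i * y ^ k) * y := by rw [pow_succ]; group
      _ = _ := by rw [ih, hi, pow_succ, mul_assoc]

/-- The key identity: expand `x^(r^s) = (y^s)⁻¹ x y^s` using `y^s = z⁻¹ y z`. -/
lemma zpow_eq_zpow_mul_zpow {x y z : H} {r s t : ℕ} (h1 : y⁻¹ * x * y = x ^ r)
    (h2 : z⁻¹ * y * z = y ^ s) (h3 : x⁻¹ * z * x = z ^ t) :
    x ^ ((r : ℤ) ^ s - r) = z ^ ((t : ℤ) - (t : ℤ) ^ r) * y ^ ((s : ℤ) - (s : ℤ) ^ t) := by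
  have e1 : (y ^ s)⁻¹ * x * y ^ s = x ^ ((r : ℤ) ^ s) := by
    simpa using conj_pow_zpow h1 s 1
  have e2 : (z ^ t)⁻¹ * y⁻¹ * z ^ t = y ^ (-(s : ℤ) ^ t) := by
    simpa using conj_pow_zpow h2 t (-1)
  have e3 : (x ^ r)⁻¹ * z⁻¹ * x ^ r = z ^ (-(t : ℤ) ^ r) := by
    simpa using conj_pow_zpow h3 r (-1)
  have e4 : z * x = x * z ^ t := by rw [← h3]; group
  have e5 : x ^ ((r : ℤ) ^ s) =
      x ^ r * (z ^ (-(t : ℤ) ^ r) * z ^ t * y ^ (-(s : ℤ) ^ t) * y ^ s) := by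
    calc x ^ ((r : ℤ) ^ s) = (z⁻¹ * y * z)⁻¹ * x * (z⁻¹ * y * z) := by rw [← e1, h2]
      _ = z⁻¹ * y⁻¹ * (z * x) * z⁻¹ * y * z := by group
      _ = z⁻¹ * (y⁻¹ * x * y) * y⁻¹ * z ^ t * (z⁻¹ * y * z) := by rw [e4]; group
      _ = x ^ r * (((x ^ r)⁻¹ * z⁻¹ * x ^ r) * z ^ t * ((z ^ t)⁻¹ * y⁻¹ * z ^ t) * y ^ s) := by
          rw [h1, h2]; group
      _ = _ := by rw [e2, e3]
  rw [sub_eq_neg_add, zpow_add, e5, sub_eq_neg_add, zpow_add, sub_eq_neg_add, zpow_add]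
  simp only [zpow_neg, zpow_natCast]
  group

lemma zpow_sq_eq_one {x y z : H} {r s t : ℕ} (hz : IsOfFinOrder z) (h1 : y⁻¹ * x * y = x ^ r)
    (h2 : z⁻¹ * y * z = y ^ s) (h3 : x⁻¹ * z * x = z ^ t) :
    x ^ (((r : ℤ) - 1) ^ 2 * ((r : ℤ) ^ s - r)) = 1 := by
  have key := zpow_eq_zpow_mul_zpow h1 h2 h3
  have hy (i : ℤ) : y⁻¹ * x ^ i * y = x ^ (i * (r : ℤ)) := by
    simpa using conj_pow_zpow h1 1 i
  -- Finite order makes `C⁻¹` a natural power of `z`, so that `C y C⁻¹` is visibly a power of `y`.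
  obtain ⟨n, hn⟩ : ∃ n : ℕ, z ^ n = (z ^ ((t : ℤ) - (t : ℤ) ^ r))⁻¹ := by
    have : (z ^ ((t : ℤ) - (t : ℤ) ^ r))⁻¹ ∈ Subgroup.zpowers z :=
      inv_mem (Subgroup.zpow_mem_zpowers _ _)
    rw [← hz.mem_powers_iff_mem_zpowers] at this
    exact this
  have hC := conj_pow_zpow h2 n 1
  rw [zpow_one, hn, inv_inv, one_mul] at hC
  set q := (r : ℤ) ^ s - r
  set C := z ^ ((t : ℤ) - (t : ℤ) ^ r)
  have e1 : x ^ (q * ((r : ℤ) - 1)) = y ^ (-1 + (s : ℤ) ^ n) := by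
    calc x ^ (q * ((r : ℤ) - 1)) = x ^ (q * r) * (x ^ q)⁻¹ := by
          rw [← zpow_neg, ← zpow_add]; congr 1; ring
      _ = y⁻¹ * (C * y * C⁻¹) := by rw [← hy, key]; group
      _ = _ := by rw [hC, zpow_add, zpow_neg_one]
  have e2 := hy (q * ((r : ℤ) - 1))
  have e3 : y⁻¹ * x ^ (q * ((r : ℤ) - 1)) * y = x ^ (q * ((r : ℤ) - 1)) := by
    rw [e1]; group
  have e4 : ((r : ℤ) - 1) ^ 2 * q = q * ((r : ℤ) - 1) * r - q * ((r : ℤ) - 1) := by ring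
  rw [e4, zpow_sub, ← e2, e3, mul_inv_cancel]

/-- The relation for one generator; the other two are instances of it under the cyclic symmetry. -/
lemma zpow_relation {x y z : H} {a b c d e f : ℤ}
    (hab : Int.gcd a b = 1) (hcd : Int.gcd c d = 1) (hef : Int.gcd e f = 1) (hcd' : c < d)
    (hx : IsOfFinOrder x) (hy : IsOfFinOrder y) (hz : IsOfFinOrder z)
    (h1 : y⁻¹ * x ^ a * y = x ^ b) (h2 : z⁻¹ * y ^ c * z = y ^ d)
    (h3 : x⁻¹ * z ^ e * x = z ^ f) :
    x ^ ((b - a) ^ 2 * (b ^ (d - c).toNat - a ^ (d - c).toNat)) = 1 := by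
  obtain ⟨r, hr⟩ := exists_nat_conj hx hab h1
  obtain ⟨s, hs⟩ := exists_nat_conj hy hcd h2
  obtain ⟨t, ht⟩ := exists_nat_conj hz hef h3
  have main := zpow_sq_eq_one hz hr hs ht
  have hra : x ^ ((r : ℤ) * a - b) = 1 := by
    have := conj_pow_zpow hr 1 a
    rw [pow_one, h1, pow_one, mul_comm] at this
    rw [zpow_sub, ← this, mul_inv_cancel]
  have hsc : y ^ (c * (s : ℤ)) = y ^ d := by
    have := conj_pow_zpow hs 1 c
    rwa [pow_one, h2, pow_one, eq_comm] at this
  set X := x ^ (((r : ℤ) - 1) ^ 2) with hX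
  have hXs : (y ^ s)⁻¹ * X * y ^ s = y⁻¹ * X * y := by
    have e1 := conj_pow_zpow hr s (((r : ℤ) - 1) ^ 2)
    have e2 := conj_pow_zpow hr 1 (((r : ℤ) - 1) ^ 2)
    rw [mul_sub, zpow_sub, mul_inv_eq_one] at main
    rw [pow_one, pow_one] at e2
    rw [e1, e2, main]
  have hcomm : Commute X (y ^ ((s : ℤ) - 1)) := by
    have e1 : X * y ^ s = y ^ s * (y⁻¹ * X * y) := by rw [← hXs]; group
    have e2 : y ^ ((s : ℤ) - 1) = y ^ s * y⁻¹ := by rw [zpow_sub_one, zpow_natCast]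
    change X * _ = _ * X
    rw [e2, ← mul_assoc, e1]; group
  have hdc : (y ^ ((s : ℤ) - 1)) ^ c = y ^ (d - c).toNat := by
    rw [← zpow_natCast y (d - c).toNat, Int.toNat_of_nonneg (by omega), ← zpow_mul, zpow_sub,
      ← hsc, ← zpow_sub]
    congr 1; ring
  have hcomm' : Commute X (y ^ (d - c).toNat) := hdc ▸ hcomm.zpow_right c
  set k := (d - c).toNat
  have hk : x ^ (((r : ℤ) - 1) ^ 2 * ((r : ℤ) ^ k - 1)) = 1 := by
    rw [mul_sub, zpow_sub, ← conj_pow_zpow hr k, mul_one, mul_inv_eq_one, mul_assoc, ← hX,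
      hcomm'.eq, inv_mul_cancel_left]
  -- Modulo the order of `x`, `b = r a`, so the exponent is `a^(k+2) (r-1)^2 (r^k - 1)`.
  rw [← orderOf_dvd_iff_zpow_eq_one] at hk hra ⊢
  have hb : b ≡ r * a [ZMOD orderOf x] := Int.modEq_iff_dvd.mpr hra
  have hmod : (b - a) ^ 2 * (b ^ k - a ^ k) ≡
      (r * a - a) ^ 2 * ((r * a) ^ k - a ^ k) [ZMOD orderOf x] := by gcongr
  refine hmod.dvd_iff.mpr (hk.trans ⟨a ^ (k + 2), ?_⟩)
  ring

end BaumslagSolitar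

/-- In any quotient of `G(a,b;c,d;e,f)` in which `x`, `y`, `z` have finite order,
the relation `x^{(b-a)²(b^{d-c}-a^{d-c})} = 1` and its cyclic permutations hold. -/
theorem finite_quotient_relations (a b c d e f : ℤ)
    (ha : a ≠ 0) (hb : b ≠ 0) (hc : c ≠ 0) (hd : d ≠ 0) (he : e ≠ 0) (hf : f ≠ 0)
    (hab : Int.gcd a b = 1) (hcd : Int.gcd c d = 1) (hef : Int.gcd e f = 1)
    (hab' : a < b) (hcd' : c < d) (hef' : e < f)
    (H : Type) [Group H] (φ : TriG a b c d e f →* H)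
    (hx : IsOfFinOrder (φ (gx a b c d e f)))
    (hy : IsOfFinOrder (φ (gy a b c d e f)))
    (hz : IsOfFinOrder (φ (gz a b c d e f))) :
    φ (gx a b c d e f) ^ ((b - a) ^ 2 * (b ^ (d - c).toNat - a ^ (d - c).toNat)) = 1 ∧
    φ (gy a b c d e f) ^ ((d - c) ^ 2 * (d ^ (f - e).toNat - c ^ (f - e).toNat)) = 1 ∧
    φ (gz a b c d e f) ^ ((f - e) ^ 2 * (f ^ (b - a).toNat - e ^ (b - a).toNat)) = 1 := by
  have rel (w : FreeGroup TGen) (hw : w ∈ triRels a b c d e f) :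
      φ (PresentedGroup.mk (triRels a b c d e f) w) = 1 := by
    rw [(PresentedGroup.mk_eq_one_iff).mpr (Subgroup.subset_normalClosure hw), map_one]
  have h1 := rel _ (Or.inl rfl)
  have h2 := rel _ (Or.inr (Or.inl rfl))
  have h3 := rel _ (Or.inr (Or.inr rfl))
  simp only [map_mul, map_inv, map_zpow, mul_inv_eq_one] at h1 h2 h3
  exact ⟨zpow_relation hab hcd hef hcd' hx hy hz h1 h2 h3,
    zpow_relation hcd hef hab hef' hy hz hx h2 h3 h1,
    zpow_relation hef hab hcd hab' hz hx hy h3 h1 h2⟩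
end

section
/- Set M = (b-a)²(b^{d-c}-a^{d-c}) and let α be an integer with α·a ≡ 1 (mod M). In Q = Q(a,b;c,d;e,f), writing X = x^{b-a} and Y = y^{d-c}, the following relations hold: x⁻¹yx = y·X^{-α}; x⁻¹Yx = Y·X^{-α^{d-c}·(b^{d-c}-a^{d-c})/(b-a)} (the exponent (b^{d-c}-a^{d-c})/(b-a) being an integer); and X⁻¹YX = Y·X^{-α^{d-c}·(b^{d-c}-a^{d-c})}. -/
open FreeGroup in
/-- Relators of `Q(a,b;c,d;e,f)`: the triangle relators together with relators
making `x`, `y`, `z` have finite order. -/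
def qRels (a b c d e f : ℤ) : Set (FreeGroup TGen) :=
  triRels a b c d e f ∪
    {(of TGen.x) ^ ((b - a) ^ 2 * (b ^ (d - c).toNat - a ^ (d - c).toNat)),
     (of TGen.y) ^ ((d - c) ^ 2 * (d ^ (f - e).toNat - c ^ (f - e).toNat)),
     (of TGen.z) ^ ((f - e) ^ 2 * (f ^ (b - a).toNat - e ^ (b - a).toNat))}

/-- The group `Q(a,b;c,d;e,f)`. -/
abbrev QGroup (a b c d e f : ℤ) := PresentedGroup (qRels a b c d e f)

def qx (a b c d e f : ℤ) : QGroup a b c d e f := PresentedGroup.of TGen.x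
def qy (a b c d e f : ℤ) : QGroup a b c d e f := PresentedGroup.of TGen.y
def qz (a b c d e f : ℤ) : QGroup a b c d e f := PresentedGroup.of TGen.z

lemma lift_of_eq_mk {α : Type*} (rels : Set (FreeGroup α)) :
    FreeGroup.lift (PresentedGroup.of (rels := rels)) = PresentedGroup.mk rels := by
  ext x
  simp [PresentedGroup.of]

/-- The canonical projection `G(a,b;c,d;e,f) → Q(a,b;c,d;e,f)`. -/
def projQ (a b c d e f : ℤ) : TriG a b c d e f →* QGroup a b c d e f :=
  PresentedGroup.toGroup (f := PresentedGroup.of) (by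
    intro r hr
    rw [lift_of_eq_mk]
    exact mk_rel_eq_one (Set.mem_union_left _ hr))

section Aux

variable {H : Type*} [Group H]

lemma zpow_eq_of_modEq {x : H} {M i j : ℤ} (hx : x ^ M = 1) (h : i ≡ j [ZMOD M]) :
    x ^ i = x ^ j := by
  obtain ⟨t, ht⟩ := h.dvd
  have : j = i + M * t := by linarith
  rw [this, zpow_add, zpow_mul, hx, one_zpow, mul_one]

lemma conj_zpow_eq {x y : H} {M a b al : ℤ} (hx : x ^ M = 1) (hal : al * a ≡ 1 [ZMOD M])
    (hr : y⁻¹ * x ^ a * y = x ^ b) (k : ℤ) : y⁻¹ * x ^ k * y = x ^ (k * (al * b)) := by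
  have hk : x ^ k = (x ^ a) ^ (al * k) := by
    rw [← zpow_mul]
    refine zpow_eq_of_modEq hx ?_
    have := (hal.mul_right k).symm
    rwa [one_mul, mul_right_comm, mul_comm (al * k)] at this
  have hc : y⁻¹ * (x ^ a) ^ (al * k) * y = (y⁻¹ * x ^ a * y) ^ (al * k) := by
    simpa using (conj_zpow (i := al * k) (a := y⁻¹) (b := x ^ a)).symm
  rw [hk, hc, hr, ← zpow_mul]
  congr 1
  ring

lemma conj_pow_zpow_eq {x y : H} {M a b al : ℤ} (hx : x ^ M = 1) (hal : al * a ≡ 1 [ZMOD M])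
    (hr : y⁻¹ * x ^ a * y = x ^ b) (n : ℕ) (k : ℤ) :
    (y ^ n)⁻¹ * x ^ k * y ^ n = x ^ (k * (al * b) ^ n) := by
  induction n with
  | zero => simp
  | succ n ih =>
    have : (y ^ (n + 1))⁻¹ * x ^ k * y ^ (n + 1) = y⁻¹ * ((y ^ n)⁻¹ * x ^ k * y ^ n) * y := by
      rw [pow_succ]; group
    rw [this, ih, conj_zpow_eq hx hal hr, pow_succ, mul_assoc]

lemma inv_mul_pow_mul {x y : H} {M a b al : ℤ} (hx : x ^ M = 1) (hal : al * a ≡ 1 [ZMOD M])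
    (hr : y⁻¹ * x ^ a * y = x ^ b) (n : ℕ) (k : ℤ) :
    (x ^ k)⁻¹ * y ^ n * x ^ k = y ^ n * x ^ (-(k * (al ^ n * (b ^ n - a ^ n)))) := by
  have h1 : (x ^ k)⁻¹ * y ^ n * x ^ k = y ^ n * ((y ^ n)⁻¹ * x ^ (-k) * y ^ n * x ^ k) := by
    rw [zpow_neg]; group
  rw [h1, conj_pow_zpow_eq hx hal hr, ← zpow_add]
  congr 1
  refine zpow_eq_of_modEq hx ?_
  have h2 := ((hal.pow n).symm.mul_left k).add_left (-k * (al * b) ^ n)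
  convert h2 using 1
  · ring
  · simp only [mul_pow]; ring

end Aux

/-- Conjugation relations in `Q(a,b;c,d;e,f)`, where `X = x^{b-a}` and `Y = y^{d-c}`
and `α·a ≡ 1 (mod (b-a)²(b^{d-c}-a^{d-c}))`. -/
theorem q_conjugation_relations (a b c d e f : ℤ)
    (ha : a ≠ 0) (hb : b ≠ 0) (hc : c ≠ 0) (hd : d ≠ 0) (he : e ≠ 0) (hf : f ≠ 0)
    (hab : Int.gcd a b = 1) (hcd : Int.gcd c d = 1) (hef : Int.gcd e f = 1)
    (hab' : a < b) (hcd' : c < d) (hef' : e < f)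
    (hab'' : ¬(a = -1 ∧ b = 1)) (hcd'' : ¬(c = -1 ∧ d = 1)) (hef'' : ¬(e = -1 ∧ f = 1))
    (al : ℤ)
    (hal : al * a ≡ 1 [ZMOD (b - a) ^ 2 * (b ^ (d - c).toNat - a ^ (d - c).toNat)]) :
    (qx a b c d e f)⁻¹ * qy a b c d e f * qx a b c d e f =
        qy a b c d e f * ((qx a b c d e f) ^ (b - a)) ^ (-al) ∧
    (b - a) ∣ (b ^ (d - c).toNat - a ^ (d - c).toNat) ∧
    (qx a b c d e f)⁻¹ * (qy a b c d e f) ^ (d - c) * qx a b c d e f =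
        (qy a b c d e f) ^ (d - c) *
          ((qx a b c d e f) ^ (b - a)) ^
            (-(al ^ (d - c).toNat * ((b ^ (d - c).toNat - a ^ (d - c).toNat) / (b - a)))) ∧
    ((qx a b c d e f) ^ (b - a))⁻¹ * (qy a b c d e f) ^ (d - c) *
        (qx a b c d e f) ^ (b - a) =
        (qy a b c d e f) ^ (d - c) *
          ((qx a b c d e f) ^ (b - a)) ^
            (-(al ^ (d - c).toNat * (b ^ (d - c).toNat - a ^ (d - c).toNat))) := by
  have hx : qx a b c d e f ^ ((b - a) ^ 2 * (b ^ (d - c).toNat - a ^ (d - c).toNat)) = 1 := by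
    have h := mk_rel_eq_one (rels := qRels a b c d e f) (Set.mem_union_right _ (Or.inl rfl))
    rwa [map_zpow] at h
  have hr : (qy a b c d e f)⁻¹ * qx a b c d e f ^ a * qy a b c d e f = qx a b c d e f ^ b := by
    have h := mk_rel_eq_one (rels := qRels a b c d e f)
      (Set.mem_union_left _ (show _ ∈ triRels a b c d e f from Or.inl rfl))
    simp only [map_mul, map_inv, map_zpow] at h
    exact mul_inv_eq_one.mp h
  have hdvd : (b - a) ∣ (b ^ (d - c).toNat - a ^ (d - c).toNat) := sub_dvd_pow_sub_pow b a _
  have hy : qy a b c d e f ^ (d - c) = qy a b c d e f ^ (d - c).toNat := by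
    rw [← zpow_natCast, Int.toNat_of_nonneg (by omega)]
  refine ⟨?_, hdvd, ?_, ?_⟩
  · have h := inv_mul_pow_mul hx hal hr 1 1
    simp only [zpow_one, pow_one] at h
    rw [h, ← zpow_mul]
    congr 2
    ring
  · have h := inv_mul_pow_mul hx hal hr (d - c).toNat 1
    rw [zpow_one] at h
    rw [hy, h, ← zpow_mul]
    congr 2
    obtain ⟨q, hq⟩ := hdvd
    rw [hq, Int.mul_ediv_cancel_left _ (by omega)]
    ring
  · rw [hy, inv_mul_pow_mul hx hal hr (d - c).toNat (b - a), ← zpow_mul]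
    congr 2
    ring
end

section
/- Let N = (b^{d-c}-a^{d-c})·(d^{f-e}-c^{f-e})·(f^{b-a}-e^{b-a}). Then N divides the order of Q = Q(a,b;c,d;e,f), and the order of Q divides N·(b-a)²(d-c)²(f-e)². -/
/-! ### Products of subgroups -/

open scoped Pointwise

/-- The formula `|H| |K| = |HK| |H ∩ K|`, when the product set `HK` is a subgroup `L`. -/
lemma card_mul_card_of_coe_eq_mul {G : Type*} [Group G] (H K L : Subgroup G)
    (hL : (L : Set G) = (H : Set G) * (K : Set G)) :
    Nat.card H * Nat.card K = Nat.card L * Nat.card (H ⊓ K : Subgroup G) := by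
  have h1 : Nat.card L = Nat.card K * K.relIndex H := by
    have hset : Nat.card L = Nat.card ((H : Set G) * (K : Set G) : Set G) := by
      rw [← hL]; rfl
    rw [hset, Subgroup.card_mul_eq_card_subgroup_mul_card_quotient]
    congr 1
    have hstab : MulAction.stabilizer H ((1 : G) : G ⧸ K) = K.subgroupOf H := by
      ext h
      rw [MulAction.mem_stabilizer_iff, Subgroup.mem_subgroupOf]
      change (((h : G) * 1 : G) : G ⧸ K) = ((1 : G) : G ⧸ K) ↔ _
      rw [QuotientGroup.eq]
      simp
    rw [Subgroup.relIndex, ← hstab, MulAction.index_stabilizer, Nat.card_coe_set_eq]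
    congr 1
    ext q
    constructor
    · rintro ⟨h, hh, rfl⟩
      refine ⟨⟨h, hh⟩, ?_⟩
      change (((h : G) * 1 : G) : G ⧸ K) = _
      rw [mul_one]
    · rintro ⟨h, rfl⟩
      refine ⟨h, h.2, ?_⟩
      change _ = (((h : G) * 1 : G) : G ⧸ K)
      rw [mul_one]
  have h2 : Nat.card (H ⊓ K : Subgroup G) * K.relIndex H = Nat.card H := by
    rw [← Subgroup.inf_relIndex_left, ← Subgroup.relIndex_bot_left, ← Subgroup.relIndex_bot_left,
      Subgroup.relIndex_mul_relIndex _ _ _ bot_le inf_le_left]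
  rw [h1, ← h2]
  ring

lemma normalizer_mem_conj {G : Type*} [Group G] {K : Subgroup G} {g k : G}
    (hg : g ∈ Subgroup.normalizer (K : Set G)) (hk : k ∈ K) : g * k * g⁻¹ ∈ K :=
  (Subgroup.mem_normalizer_iff.mp hg k).mp hk

lemma normalizer_mem_conj_inv {G : Type*} [Group G] {K : Subgroup G} {g k : G}
    (hg : g ∈ Subgroup.normalizer (K : Set G)) (hk : k ∈ K) : g⁻¹ * k * g ∈ K :=
  (Subgroup.mem_normalizer_iff''.mp hg k).mp hk

/-- The set `⟨x, y⟩⟨z⟩` is closed under right multiplication by the generators, because `k x = x (x⁻¹ k x)`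
and `k y = (k y k⁻¹) k` for `k ∈ ⟨z⟩`. -/
lemma closure_eq_sup_mul {G : Type*} [Group G] (x y z : G)
    (hyz : z ∈ Subgroup.normalizer (Subgroup.zpowers y : Set G))
    (hzx : x ∈ Subgroup.normalizer (Subgroup.zpowers z : Set G)) :
    (Subgroup.closure {x, y, z} : Set G) =
      ((Subgroup.zpowers x ⊔ Subgroup.zpowers y : Subgroup G) : Set G) *
        (Subgroup.zpowers z : Set G) := by
  have hyle : Subgroup.zpowers y ≤ Subgroup.zpowers x ⊔ Subgroup.zpowers y := le_sup_right
  have hxc : x ∈ Subgroup.closure {x, y, z} := Subgroup.subset_closure (by simp)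
  have hyc : y ∈ Subgroup.closure {x, y, z} := Subgroup.subset_closure (by simp)
  have hzc : z ∈ Subgroup.closure {x, y, z} := Subgroup.subset_closure (by simp)
  have stepx : ∀ g, g ∈ Subgroup.zpowers x →
      g ∈ Subgroup.normalizer (Subgroup.zpowers z : Set G) :=
    fun g hg => (Subgroup.zpowers_le.mpr hzx) hg
  have stepz : ∀ g, g ∈ Subgroup.zpowers z →
      g ∈ Subgroup.normalizer (Subgroup.zpowers y : Set G) :=
    fun g hg => (Subgroup.zpowers_le.mpr hyz) hg
  have key : ∀ g w : G,
      (w ∈ Subgroup.zpowers x ∨ w ∈ Subgroup.zpowers y ∨ w ∈ Subgroup.zpowers z) →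
      g ∈ ((Subgroup.zpowers x ⊔ Subgroup.zpowers y : Subgroup G) : Set G) *
        (Subgroup.zpowers z : Set G) →
      g * w ∈ ((Subgroup.zpowers x ⊔ Subgroup.zpowers y : Subgroup G) : Set G) *
        (Subgroup.zpowers z : Set G) := by
    intro g w hw hg
    obtain ⟨h, hh, k, hk, rfl⟩ := Set.mem_mul.mp hg
    rcases hw with hw | hw | hw
    · refine Set.mem_mul.mpr ⟨h * w, mul_mem hh ((le_sup_left : Subgroup.zpowers x ≤ _) hw),
        w⁻¹ * k * w, normalizer_mem_conj_inv (stepx w hw) hk, by group⟩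
    · refine Set.mem_mul.mpr ⟨h * (k * w * k⁻¹),
        mul_mem hh (hyle (normalizer_mem_conj (stepz k hk) hw)), k, hk, by group⟩
    · exact Set.mem_mul.mpr ⟨h, hh, k * w, mul_mem hk hw, by group⟩
  have gens : ∀ w ∈ ({x, y, z} : Set G),
      w ∈ Subgroup.zpowers x ∨ w ∈ Subgroup.zpowers y ∨ w ∈ Subgroup.zpowers z := by
    rintro w (rfl | rfl | rfl)
    · exact Or.inl (Subgroup.mem_zpowers _)
    · exact Or.inr (Or.inl (Subgroup.mem_zpowers _))
    · exact Or.inr (Or.inr (Subgroup.mem_zpowers _))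
  apply Set.Subset.antisymm
  · intro g hg
    induction hg using Subgroup.closure_induction_right with
    | one => exact Set.mem_mul.mpr ⟨1, one_mem _, 1, one_mem _, one_mul 1⟩
    | mul_right g hg w hw ih => exact key g w (gens w hw) ih
    | mul_inv_cancel g hg w hw ih =>
      refine key g w⁻¹ ?_ ih
      simpa only [inv_mem_iff] using gens w hw
  · rintro g ⟨h, hh, k, hk, rfl⟩
    refine mul_mem (?_ : h ∈ Subgroup.closure {x, y, z}) ?_
    · exact (sup_le (Subgroup.zpowers_le.mpr hxc) (Subgroup.zpowers_le.mpr hyc) :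
        Subgroup.zpowers x ⊔ Subgroup.zpowers y ≤ _) hh
    · exact (Subgroup.zpowers_le.mpr hzc) hk

lemma zpowers_sup_eq_mul {G : Type*} [Group G] (x y : G)
    (hxy : y ∈ Subgroup.normalizer (Subgroup.zpowers x : Set G)) :
    ((Subgroup.zpowers x ⊔ Subgroup.zpowers y : Subgroup G) : Set G) =
      (Subgroup.zpowers x : Set G) * (Subgroup.zpowers y : Set G) :=
  Subgroup.coe_mul_of_right_le_normalizer_left _ _ (Subgroup.zpowers_le.mpr hxy)

lemma orderOf_mul_eq_card_closure {G : Type*} [Group G] (x y z : G)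
    (hxy : y ∈ Subgroup.normalizer (Subgroup.zpowers x : Set G))
    (hyz : z ∈ Subgroup.normalizer (Subgroup.zpowers y : Set G))
    (hzx : x ∈ Subgroup.normalizer (Subgroup.zpowers z : Set G)) :
    orderOf x * orderOf y * orderOf z =
      Nat.card (Subgroup.closure {x, y, z}) *
        Nat.card ((Subgroup.zpowers x ⊔ Subgroup.zpowers y) ⊓ Subgroup.zpowers z : Subgroup G) *
        Nat.card (Subgroup.zpowers x ⊓ Subgroup.zpowers y : Subgroup G) := by
  have h1 := card_mul_card_of_coe_eq_mul _ _ _ (zpowers_sup_eq_mul x y hxy)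
  have h2 := card_mul_card_of_coe_eq_mul _ _ _ (closure_eq_sup_mul x y z hyz hzx)
  rw [← h2, ← Nat.card_zpowers x, ← Nat.card_zpowers y, ← Nat.card_zpowers z, h1]
  ring

/-- The relation `y⁻¹ x^a y = x^b` makes `y` normalize `⟨x⟩` once `x` has an exponent coprime to `a`
and `b`, because then `x^a` and `x^b` both generate `⟨x⟩`. -/
lemma mem_normalizer_zpowers {G : Type*} [Group G] {x y : G} {a b n : ℤ}
    (hn : x ^ n = 1) (han : IsCoprime a n) (hbn : IsCoprime b n)
    (h : y⁻¹ * x ^ a * y = x ^ b) :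
    y ∈ Subgroup.normalizer (Subgroup.zpowers x : Set G) := by
  have gen : ∀ c : ℤ, IsCoprime c n → ∀ g ∈ Subgroup.zpowers x, ∃ k : ℤ, g = (x ^ c) ^ k := by
    rintro c ⟨u, v, huv⟩ g ⟨m, rfl⟩
    refine ⟨u * m, ?_⟩
    change x ^ m = _
    have hm : m = c * (u * m) + n * (v * m) := by linear_combination (-m) * huv
    conv_lhs => rw [hm, zpow_add, zpow_mul x n, hn, one_zpow, mul_one]
    rw [zpow_mul]
  have conj : ∀ k : ℤ, y⁻¹ * (x ^ a) ^ k * y = (x ^ b) ^ k := by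
    intro k
    have := conj_zpow (i := k) (a := y⁻¹) (b := x ^ a)
    rw [inv_inv] at this
    rw [← this, h]
  rw [Subgroup.mem_normalizer_iff'']
  intro g
  constructor
  · intro hg
    obtain ⟨k, rfl⟩ := gen a han g hg
    rw [conj]
    exact zpow_mem (zpow_mem (Subgroup.mem_zpowers x) _) _
  · intro hg
    obtain ⟨k, hk⟩ := gen b hbn _ hg
    rw [← conj] at hk
    rw [mul_left_inj, mul_right_inj] at hk
    rw [hk]
    exact zpow_mem (zpow_mem (Subgroup.mem_zpowers x) _) _

/-! ### Arithmetic -/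

lemma isCoprime_pow_sub_pow {a b : ℤ} (hab : IsCoprime a b) {n : ℕ} (hn : 0 < n) :
    IsCoprime a (b ^ n - a ^ n) ∧ IsCoprime b (b ^ n - a ^ n) := by
  have hn' : n ≠ 0 := hn.ne'
  constructor
  · obtain ⟨t, ht⟩ := dvd_pow_self a hn'
    rw [ht, sub_eq_add_neg, ← mul_neg]
    exact (IsCoprime.add_mul_left_right_iff).mpr hab.pow_right
  · obtain ⟨t, ht⟩ := dvd_pow_self b hn'
    rw [ht, sub_eq_add_neg, add_comm]
    exact (IsCoprime.add_mul_left_right_iff).mpr hab.symm.pow_right.neg_right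

lemma isCoprime_exponent {a b : ℤ} (hab : IsCoprime a b) {n : ℕ} (hn : 0 < n) :
    IsCoprime a ((b - a) ^ 2 * (b ^ n - a ^ n)) ∧ IsCoprime b ((b - a) ^ 2 * (b ^ n - a ^ n)) := by
  have h1 := isCoprime_pow_sub_pow hab one_pos
  have h2 := isCoprime_pow_sub_pow hab hn
  simp only [pow_one] at h1
  exact ⟨h1.1.pow_right.mul_right h2.1, h1.2.pow_right.mul_right h2.2⟩

/-! ### The model quotients -/

/-- The affine model: `u` is the translation by `1` on `ℤ/(b^n - a^n)`, and `v` is the multiplication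
by `a/b`. -/
lemma exists_affine {a b : ℤ} (hab : IsCoprime a b) {n : ℕ} (hn : 0 < n) :
    ∃ (P : Type) (_ : Group P) (u v : P), (∀ k : ℤ, u ^ k = 1 ↔ (b ^ n - a ^ n) ∣ k) ∧
      v ^ (n : ℤ) = 1 ∧ v⁻¹ * u ^ a * v = u ^ b := by
  obtain ⟨ha, hb⟩ := isCoprime_pow_sub_pow hab hn
  set m : ℕ := (b ^ n - a ^ n).natAbs with hm
  have hcast : ∀ k : ℤ, (k : ZMod m) = 0 ↔ (b ^ n - a ^ n) ∣ k := by
    intro k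
    rw [ZMod.intCast_zmod_eq_zero_iff_dvd, hm, Int.natAbs_dvd]
  have unit : ∀ c : ℤ, IsCoprime c (b ^ n - a ^ n) → ∃ w : (ZMod m)ˣ, (w : ZMod m) = c := by
    rintro c ⟨s, t, hst⟩
    have : (s : ZMod m) * (c : ZMod m) = 1 := by
      have h0 := (hcast (t * (b ^ n - a ^ n))).mpr (dvd_mul_left _ _)
      have h1 : ((s * c + t * (b ^ n - a ^ n) : ℤ) : ZMod m) = 1 := by rw [hst]; simp
      rw [Int.cast_add, h0, add_zero, Int.cast_mul] at h1
      exact h1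
    exact ⟨Units.mkOfMulEqOne (c : ZMod m) s (by rw [mul_comm]; exact this), rfl⟩
  obtain ⟨wa, hwa⟩ := unit a ha
  obtain ⟨wb, hwb⟩ := unit b hb
  have hpow : wa ^ n = wb ^ n := by
    ext
    rw [Units.val_pow_eq_pow_val, Units.val_pow_eq_pow_val, hwa, hwb]
    have := (hcast (b ^ n - a ^ n)).mpr dvd_rfl
    push_cast at this
    exact (sub_eq_zero.mp this).symm
  let τ : Equiv.Perm (ZMod m) :=
    MulAction.toPermHom (Multiplicative (ZMod m)) (ZMod m) (Multiplicative.ofAdd 1)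
  have hu : ∀ k : ℤ, ∀ t : ZMod m, (τ ^ k) t = t + k := by
    intro k t
    rw [← map_zpow, ← ofAdd_zsmul, zsmul_one, add_comm]
    rfl
  refine ⟨Equiv.Perm (ZMod m), inferInstance, τ,
    MulAction.toPermHom (ZMod m)ˣ (ZMod m) (wa * wb⁻¹), ?_, ?_, ?_⟩
  · intro k
    rw [← hcast k]
    constructor
    · intro h
      have := hu k 0
      rw [h] at this
      simpa using this.symm
    · intro h
      ext1 t
      rw [hu, h, add_zero]
      rfl
  · rw [zpow_natCast, ← map_pow, mul_pow, inv_pow, hpow, mul_inv_cancel, map_one]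
  · rw [mul_assoc, inv_mul_eq_iff_eq_mul]
    ext1 t
    rw [Equiv.Perm.mul_apply, Equiv.Perm.mul_apply, hu, hu, MulAction.toPermHom_apply,
      MulAction.toPerm_apply, MulAction.toPerm_apply, smul_add]
    congr 1
    rw [Units.smul_def, smul_eq_mul, Units.val_mul, ← hwa, ← hwb, mul_assoc, Units.inv_mul, mul_one]

lemma exists_cyclic (n : ℤ) :
    ∃ (P : Type) (_ : CommGroup P) (g : P), ∀ k : ℤ, g ^ k = 1 ↔ n ∣ k := by
  refine ⟨Multiplicative (ZMod n.natAbs), inferInstance, Multiplicative.ofAdd 1, fun k => ?_⟩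
  rw [← ofAdd_zsmul, ofAdd_eq_one, zsmul_one, ZMod.intCast_zmod_eq_zero_iff_dvd, Int.natAbs_dvd]

lemma zpow_eq_one_of_dvd {G : Type*} [Group G] {g : G} {n k : ℤ} (h : g ^ n = 1) (hk : n ∣ k) :
    g ^ k = 1 := by
  obtain ⟨t, rfl⟩ := hk
  rw [zpow_mul, h, one_zpow]

lemma zpow_eq_zpow_of_sub {G : Type*} [Group G] {g : G} {c d : ℤ} (h : g ^ (d - c) = 1) :
    g ^ c = g ^ d := by
  rw [zpow_sub, mul_inv_eq_one] at h
  exact h.symm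

lemma orderOf_eq_natAbs {G : Type*} [Group G] {g : G} {n : ℤ} (h : ∀ k : ℤ, g ^ k = 1 ↔ n ∣ k) :
    orderOf g = n.natAbs := by
  apply Nat.dvd_antisymm
  · rw [← Int.natCast_dvd, orderOf_dvd_iff_zpow_eq_one, h]
  · rw [← Int.natCast_dvd_natCast, Int.natAbs_dvd, ← h, zpow_natCast, pow_orderOf_eq_one]

/-- A group containing elements which satisfy the relations of `Q` and generate a subgroup of order
`|A B C|`: the product of the three affine models and of `ℤ/α × ℤ/γ × ℤ/ε`. -/
lemma exists_model {a b c d e f : ℤ} (hab : IsCoprime a b) (hcd : IsCoprime c d)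
    (hef : IsCoprime e f) (hab' : a < b) (hcd' : c < d) (hef' : e < f) :
    ∃ (T : Type) (_ : Group T) (x y z : T),
      y⁻¹ * x ^ a * y = x ^ b ∧ z⁻¹ * y ^ c * z = y ^ d ∧ x⁻¹ * z ^ e * x = z ^ f ∧
      x ^ (b ^ (d - c).toNat - a ^ (d - c).toNat) = 1 ∧
      y ^ (d ^ (f - e).toNat - c ^ (f - e).toNat) = 1 ∧
      z ^ (f ^ (b - a).toNat - e ^ (b - a).toNat) = 1 ∧
      Nat.card (Subgroup.closure {x, y, z}) =
        (b ^ (d - c).toNat - a ^ (d - c).toNat).natAbs *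
        (d ^ (f - e).toNat - c ^ (f - e).toNat).natAbs *
        (f ^ (b - a).toNat - e ^ (b - a).toNat).natAbs := by
  have hα : 0 < (b - a).toNat := by omega
  have hγ : 0 < (d - c).toNat := by omega
  have hε : 0 < (f - e).toNat := by omega
  obtain ⟨P₁, _, u₁, v₁, hu₁, hv₁, hr₁⟩ := exists_affine hab hγ
  obtain ⟨P₂, _, u₂, v₂, hu₂, hv₂, hr₂⟩ := exists_affine hcd hε
  obtain ⟨P₃, _, u₃, v₃, hu₃, hv₃, hr₃⟩ := exists_affine hef hα
  rw [Int.toNat_of_nonneg (by omega)] at hv₁ hv₂ hv₃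
  obtain ⟨C₁, _, g₁, hg₁⟩ := exists_cyclic (b - a)
  obtain ⟨C₂, _, g₂, hg₂⟩ := exists_cyclic (d - c)
  obtain ⟨C₃, _, g₃, hg₃⟩ := exists_cyclic (f - e)
  obtain ⟨hcA, hcA'⟩ := isCoprime_pow_sub_pow hab hγ
  obtain ⟨hcB, hcB'⟩ := isCoprime_pow_sub_pow hcd hε
  obtain ⟨hcC, hcC'⟩ := isCoprime_pow_sub_pow hef hα
  have hdA : (b - a) ∣ b ^ (d - c).toNat - a ^ (d - c).toNat := sub_dvd_pow_sub_pow _ _ _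
  have hdB : (d - c) ∣ d ^ (f - e).toNat - c ^ (f - e).toNat := sub_dvd_pow_sub_pow _ _ _
  have hdC : (f - e) ∣ f ^ (b - a).toNat - e ^ (b - a).toNat := sub_dvd_pow_sub_pow _ _ _
  generalize b ^ (d - c).toNat - a ^ (d - c).toNat = A at *
  generalize d ^ (f - e).toNat - c ^ (f - e).toNat = B at *
  generalize f ^ (b - a).toNat - e ^ (b - a).toNat = C at *
  have hv₁' := zpow_eq_zpow_of_sub hv₁
  have hv₂' := zpow_eq_zpow_of_sub hv₂
  have hv₃' := zpow_eq_zpow_of_sub hv₃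
  have hg₁' := zpow_eq_zpow_of_sub ((hg₁ _).mpr dvd_rfl)
  have hg₂' := zpow_eq_zpow_of_sub ((hg₂ _).mpr dvd_rfl)
  have hg₃' := zpow_eq_zpow_of_sub ((hg₃ _).mpr dvd_rfl)
  let x : P₁ × P₂ × P₃ × C₁ × C₂ × C₃ := (u₁, 1, v₃, g₁, 1, 1)
  let y : P₁ × P₂ × P₃ × C₁ × C₂ × C₃ := (v₁, u₂, 1, 1, g₂, 1)
  let z : P₁ × P₂ × P₃ × C₁ × C₂ × C₃ := (1, v₂, u₃, 1, 1, g₃)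
  have hxk : ∀ k : ℤ, x ^ k = 1 ↔ A ∣ k := by
    intro k
    simp only [x, Prod.pow_mk, Prod.mk_eq_one, one_zpow, hu₁, hg₁, and_true, true_and]
    exact ⟨fun h => h.1, fun h =>
      ⟨h, zpow_eq_one_of_dvd hv₃ (hdA.trans h), hdA.trans h⟩⟩
  have hyk : ∀ k : ℤ, y ^ k = 1 ↔ B ∣ k := by
    intro k
    simp only [y, Prod.pow_mk, Prod.mk_eq_one, one_zpow, hu₂, hg₂, and_true, true_and]
    exact ⟨fun h => h.2.1, fun h =>
      ⟨zpow_eq_one_of_dvd hv₁ (hdB.trans h), h, hdB.trans h⟩⟩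
  have hzk : ∀ k : ℤ, z ^ k = 1 ↔ C ∣ k := by
    intro k
    simp only [z, Prod.pow_mk, Prod.mk_eq_one, one_zpow, hu₃, hg₃, true_and]
    exact ⟨fun h => h.2.1, fun h =>
      ⟨zpow_eq_one_of_dvd hv₂ (hdC.trans h), h, hdC.trans h⟩⟩
  have hxy : y⁻¹ * x ^ a * y = x ^ b := by
    simp only [x, y, Prod.pow_mk, Prod.inv_mk, Prod.mk_mul_mk, one_zpow, inv_one, one_mul, mul_one,
      inv_mul_cancel, hr₁, hv₃', hg₁']
  have hyz : z⁻¹ * y ^ c * z = y ^ d := by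
    simp only [y, z, Prod.pow_mk, Prod.inv_mk, Prod.mk_mul_mk, one_zpow, inv_one, one_mul, mul_one,
      inv_mul_cancel, hr₂, hv₁', hg₂']
  have hzx : x⁻¹ * z ^ e * x = z ^ f := by
    simp only [x, z, Prod.pow_mk, Prod.inv_mk, Prod.mk_mul_mk, one_zpow, inv_one, one_mul, mul_one,
      inv_mul_cancel, hr₃, hv₂', hg₃']
  have hxA := (hxk A).mpr dvd_rfl
  have hyB := (hyk B).mpr dvd_rfl
  have hzC := (hzk C).mpr dvd_rfl
  have nxy := mem_normalizer_zpowers hxA hcA hcA' hxy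
  have nyz := mem_normalizer_zpowers hyB hcB hcB' hyz
  have nzx := mem_normalizer_zpowers hzC hcC hcC' hzx
  have hcard := orderOf_mul_eq_card_closure x y z nxy nyz nzx
  have htriv : ∀ i j k : ℤ, x ^ i * y ^ j = z ^ k → z ^ k = 1 := by
    intro i j k h
    simp only [x, y, z, Prod.pow_mk, Prod.mk_mul_mk, Prod.mk.injEq, one_zpow, one_mul, mul_one,
      hg₁] at h
    obtain ⟨-, -, h3, h4, -, h6⟩ := h
    have hk : (f - e) ∣ k := (hg₃ k).mp h6.symm
    rw [zpow_eq_one_of_dvd hv₃ h4] at h3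
    rw [hzk, ← hu₃, h3]
  have htriv' : ∀ i j : ℤ, x ^ i = y ^ j → y ^ j = 1 := by
    intro i j h
    simp only [x, y, Prod.pow_mk, Prod.mk.injEq, one_zpow] at h
    rw [hyk, ← hu₂, ← h.2.1]
  have hinf : (Subgroup.zpowers x ⊔ Subgroup.zpowers y) ⊓ Subgroup.zpowers z = ⊥ := by
    rw [eq_bot_iff]
    rintro w ⟨hw, k, rfl⟩
    change z ^ k ∈ ((Subgroup.zpowers x ⊔ Subgroup.zpowers y : Subgroup _) : Set _) at hw
    rw [zpowers_sup_eq_mul x y nxy] at hw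
    obtain ⟨-, ⟨i, rfl⟩, -, ⟨j, rfl⟩, hw⟩ := Set.mem_mul.mp hw
    exact htriv i j k hw
  have hinf' : Subgroup.zpowers x ⊓ Subgroup.zpowers y = ⊥ := by
    rw [eq_bot_iff]
    rintro w ⟨⟨i, hi⟩, j, rfl⟩
    exact htriv' i j hi
  refine ⟨_, inferInstance, x, y, z, hxy, hyz, hzx, hxA, hyB, hzC, ?_⟩
  rw [hinf, hinf', Subgroup.card_bot, mul_one, mul_one, orderOf_eq_natAbs hxk,
    orderOf_eq_natAbs hyk, orderOf_eq_natAbs hzk] at hcard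
  exact hcard.symm

/-! ### The order of `Q` -/

/-- The order of `Q(a,b;c,d;e,f)` is `(b^{d-c}-a^{d-c})(d^{f-e}-c^{f-e})(f^{b-a}-e^{b-a})`
times a divisor of `(b-a)²(d-c)²(f-e)²`. -/
theorem q_order (a b c d e f : ℤ)
    (ha : a ≠ 0) (hb : b ≠ 0) (hc : c ≠ 0) (hd : d ≠ 0) (he : e ≠ 0) (hf : f ≠ 0)
    (hab : Int.gcd a b = 1) (hcd : Int.gcd c d = 1) (hef : Int.gcd e f = 1)
    (hab' : a < b) (hcd' : c < d) (hef' : e < f)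
    (hab'' : ¬(a = -1 ∧ b = 1)) (hcd'' : ¬(c = -1 ∧ d = 1)) (hef'' : ¬(e = -1 ∧ f = 1)) :
    ((b ^ (d - c).toNat - a ^ (d - c).toNat) * (d ^ (f - e).toNat - c ^ (f - e).toNat) *
        (f ^ (b - a).toNat - e ^ (b - a).toNat)) ∣ (Nat.card (QGroup a b c d e f) : ℤ) ∧
    (Nat.card (QGroup a b c d e f) : ℤ) ∣
      (b ^ (d - c).toNat - a ^ (d - c).toNat) * (d ^ (f - e).toNat - c ^ (f - e).toNat) *
        (f ^ (b - a).toNat - e ^ (b - a).toNat) *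
        ((b - a) ^ 2 * (d - c) ^ 2 * (f - e) ^ 2) := by
  have hab₁ : IsCoprime a b := Int.isCoprime_iff_gcd_eq_one.mpr hab
  have hcd₁ : IsCoprime c d := Int.isCoprime_iff_gcd_eq_one.mpr hcd
  have hef₁ : IsCoprime e f := Int.isCoprime_iff_gcd_eq_one.mpr hef
  constructor
  · obtain ⟨T, _, x, y, z, hxy, hyz, hzx, hx, hy, hz, hcard⟩ :=
      exists_model hab₁ hcd₁ hef₁ hab' hcd' hef'
    let φ : QGroup a b c d e f →* T :=
      PresentedGroup.toGroup (f := fun g : TGen => TGen.casesOn g x y z) (by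
        rintro r ((rfl | rfl | rfl) | (rfl | rfl | rfl))
        · simp [hxy]
        · simp [hyz]
        · simp [hzx]
        · simpa using zpow_eq_one_of_dvd hx (dvd_mul_left _ _)
        · simpa using zpow_eq_one_of_dvd hy (dvd_mul_left _ _)
        · simpa using zpow_eq_one_of_dvd hz (dvd_mul_left _ _))
    have hle : Subgroup.closure {x, y, z} ≤ φ.range := by
      rw [Subgroup.closure_le]
      rintro w (rfl | rfl | rfl)
      · exact ⟨PresentedGroup.of TGen.x, PresentedGroup.toGroup.of _⟩
      · exact ⟨PresentedGroup.of TGen.y, PresentedGroup.toGroup.of _⟩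
      · exact ⟨PresentedGroup.of TGen.z, PresentedGroup.toGroup.of _⟩
    have hdvd := (Subgroup.card_dvd_of_le hle).trans (Subgroup.card_range_dvd φ)
    rw [hcard, ← Int.natAbs_mul, ← Int.natAbs_mul] at hdvd
    exact Int.natAbs_dvd.mp (Int.natCast_dvd_natCast.mpr hdvd)
  · have rel : ∀ r ∈ qRels a b c d e f, PresentedGroup.mk (qRels a b c d e f) r = 1 :=
      fun r hr => mk_rel_eq_one hr
    have hxy : (qy a b c d e f)⁻¹ * qx a b c d e f ^ a * qy a b c d e f = qx a b c d e f ^ b :=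
      mul_inv_eq_one.mp (rel _ (Or.inl (Or.inl rfl)))
    have hyz : (qz a b c d e f)⁻¹ * qy a b c d e f ^ c * qz a b c d e f = qy a b c d e f ^ d :=
      mul_inv_eq_one.mp (rel _ (Or.inl (Or.inr (Or.inl rfl))))
    have hzx : (qx a b c d e f)⁻¹ * qz a b c d e f ^ e * qx a b c d e f = qz a b c d e f ^ f :=
      mul_inv_eq_one.mp (rel _ (Or.inl (Or.inr (Or.inr rfl))))
    have hx : qx a b c d e f ^ ((b - a) ^ 2 * (b ^ (d - c).toNat - a ^ (d - c).toNat)) = 1 :=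
      rel _ (Or.inr (Or.inl rfl))
    have hy : qy a b c d e f ^ ((d - c) ^ 2 * (d ^ (f - e).toNat - c ^ (f - e).toNat)) = 1 :=
      rel _ (Or.inr (Or.inr (Or.inl rfl)))
    have hz : qz a b c d e f ^ ((f - e) ^ 2 * (f ^ (b - a).toNat - e ^ (b - a).toNat)) = 1 :=
      rel _ (Or.inr (Or.inr (Or.inr rfl)))
    have cx := isCoprime_exponent hab₁ (n := (d - c).toNat) (by omega)
    have cy := isCoprime_exponent hcd₁ (n := (f - e).toNat) (by omega)
    have cz := isCoprime_exponent hef₁ (n := (b - a).toNat) (by omega)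
    have hcard := orderOf_mul_eq_card_closure _ _ _
      (mem_normalizer_zpowers hx cx.1 cx.2 hxy) (mem_normalizer_zpowers hy cy.1 cy.2 hyz)
      (mem_normalizer_zpowers hz cz.1 cz.2 hzx)
    have htop : Subgroup.closure {qx a b c d e f, qy a b c d e f, qz a b c d e f} = ⊤ := by
      rw [eq_top_iff, ← PresentedGroup.closure_range_of, Subgroup.closure_le]
      rintro w ⟨g, rfl⟩
      apply Subgroup.subset_closure
      cases g
      · exact Or.inl rfl
      · exact Or.inr (Or.inl rfl)
      · exact Or.inr (Or.inr rfl)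
    rw [htop, Subgroup.card_top, mul_assoc (Nat.card (QGroup a b c d e f))] at hcard
    have h1 : (Nat.card (QGroup a b c d e f) : ℤ) ∣
        (orderOf (qx a b c d e f) : ℤ) * orderOf (qy a b c d e f) * orderOf (qz a b c d e f) := by
      exact_mod_cast Dvd.intro _ hcard.symm
    refine h1.trans ((mul_dvd_mul (mul_dvd_mul (orderOf_dvd_iff_zpow_eq_one.mpr hx)
      (orderOf_dvd_iff_zpow_eq_one.mpr hy)) (orderOf_dvd_iff_zpow_eq_one.mpr hz)).trans
      (dvd_of_eq ?_))
    ring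
end
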